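/- Fix an integer d ≥ 2 and δ ∈ (0,1). Let a^{jk} : ℝ → ℝ (1 ≤ j,k ≤ d) be smooth functions of x¹ only, with a^{jk} = a^{kj} and δ|θ|² ≤ Σ_{j,k=1}^d a^{jk}(x¹) θ^j θ^k ≤ δ⁻¹|θ|² for all x¹ and θ ∈ ℝ^d. Set L₀v = v_t + Σ_{j,k} a^{jk}(x¹) v_{x^j x^k}. Let u : ℝ^{d+1} → ℝ be smooth with compact support, and let h be smooth on an open neighborhood of the closure of Q_4 with L₀h = 0 in Q_4 and h = u on the parabolic boundary ∂'Q_4 = ([0,16] × ∂B_4) ∪ ({16} × B_4). Then sup_{Q_1} |h_{tt}| + Σ_{j=1}^d sup_{Q_1} |h_{t x^j}| + Σ_{j=1}^d Σ_{k=2}^d sup_{Q_1} |h_{t x^j x^k}| + Σ_{i,j=1}^d Σ_{k=2}^d sup_{Q_1} |h_{x^i x^j x^k}| ≤ N [ (∫_{Q_4} |L₀u|² dx dt)^{1/2} + (∫_{Q_4} |u_{xx}|² dx dt)^{1/2} ], where N = N(d,δ) and |u_{xx}|² = Σ_{j,k} |u_{x^j x^k}|². -/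

import Mathlib

open MeasureTheory

/-- Partial derivative in `t`. -/
noncomputable def pdt {d : ℕ} (u : ℝ × (Fin d → ℝ) → ℝ) : ℝ × (Fin d → ℝ) → ℝ :=
  fun p => fderiv ℝ u p (1, 0)

/-- Partial derivative in `x^j`. -/
noncomputable def pdx {d : ℕ} (j : Fin d) (u : ℝ × (Fin d → ℝ) → ℝ) :
    ℝ × (Fin d → ℝ) → ℝ :=
  fun p => fderiv ℝ u p (0, Pi.single j 1)

/-- Second partial derivative in `x^j, x^k`. -/
noncomputable def pdxx {d : ℕ} (j k : Fin d) (u : ℝ × (Fin d → ℝ) → ℝ) :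
    ℝ × (Fin d → ℝ) → ℝ :=
  pdx j (pdx k u)

/-- Open Euclidean ball `B_r ⊂ ℝ^d` centered at the origin. -/
def ballE (d : ℕ) (r : ℝ) : Set (Fin d → ℝ) := {x | ∑ j, (x j) ^ 2 < r ^ 2}

/-- Euclidean sphere `∂B_r ⊂ ℝ^d` centered at the origin. -/
def sphereE (d : ℕ) (r : ℝ) : Set (Fin d → ℝ) := {x | ∑ j, (x j) ^ 2 = r ^ 2}

/-- Parabolic cylinder `Q_r = (0,r²) × B_r`. -/
def Qc (d : ℕ) (r : ℝ) : Set (ℝ × (Fin d → ℝ)) := Set.Ioo 0 (r ^ 2) ×ˢ ballE d r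

/-- Parabolic boundary `∂'Q_r = ([0,r²] × ∂B_r) ∪ ({r²} × B_r)`. -/
def pbQc (d : ℕ) (r : ℝ) : Set (ℝ × (Fin d → ℝ)) :=
  (Set.Icc 0 (r ^ 2) ×ˢ sphereE d r) ∪ (({r ^ 2} : Set ℝ) ×ˢ ballE d r)


section basics
variable {d : ℕ}

lemma pdt_smooth {u : ℝ × (Fin d → ℝ) → ℝ} (hu : ContDiff ℝ (⊤ : ℕ∞) u) :
    ContDiff ℝ (⊤ : ℕ∞) (pdt u) := by
  unfold pdt
  exact (hu.fderiv_right (m := (⊤ : ℕ∞)) (by simp)).clm_apply contDiff_const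

lemma pdx_smooth (j : Fin d) {u : ℝ × (Fin d → ℝ) → ℝ} (hu : ContDiff ℝ (⊤ : ℕ∞) u) :
    ContDiff ℝ (⊤ : ℕ∞) (pdx j u) := by
  unfold pdx
  exact (hu.fderiv_right (m := (⊤ : ℕ∞)) (by simp)).clm_apply contDiff_const

lemma dir_comm {u : ℝ × (Fin d → ℝ) → ℝ} (hu : ContDiff ℝ (⊤ : ℕ∞) u)
    (ξ η : ℝ × (Fin d → ℝ)) (p) :
    fderiv ℝ (fun q => fderiv ℝ u q ξ) p η = fderiv ℝ (fun q => fderiv ℝ u q η) p ξ := by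
  have hd : Differentiable ℝ (fderiv ℝ u) :=
    (hu.fderiv_right (m := (⊤ : ℕ∞)) (by simp)).differentiable (by simp)
  have hs : IsSymmSndFDerivAt ℝ u p := by
    apply hu.contDiffAt.isSymmSndFDerivAt
    rw [minSmoothness_of_isRCLikeNormedField]
    exact WithTop.coe_le_coe.2 (le_top : (2 : ℕ∞) ≤ ⊤)
  rw [fderiv_clm_apply (hd p) (by fun_prop), fderiv_clm_apply (hd p) (by fun_prop)]
  simpa using hs η ξ

lemma pdx_pdt {u : ℝ × (Fin d → ℝ) → ℝ} (hu : ContDiff ℝ (⊤ : ℕ∞) u) (j : Fin d) :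
    pdx j (pdt u) = pdt (pdx j u) := by
  funext p; exact dir_comm hu _ _ p

lemma pdx_pdx {u : ℝ × (Fin d → ℝ) → ℝ} (hu : ContDiff ℝ (⊤ : ℕ∞) u) (j k : Fin d) :
    pdx j (pdx k u) = pdx k (pdx j u) := by
  funext p; exact dir_comm hu _ _ p

lemma sm_diff {u : ℝ × (Fin d → ℝ) → ℝ} (hu : ContDiff ℝ (⊤ : ℕ∞) u) : Differentiable ℝ u :=
  hu.differentiable (by simp)

lemma pdt_mul {f g : ℝ × (Fin d → ℝ) → ℝ} (hf : ContDiff ℝ (⊤ : ℕ∞) f)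
    (hg : ContDiff ℝ (⊤ : ℕ∞) g) (p) :
    pdt (fun p => f p * g p) p = f p * pdt g p + g p * pdt f p := by
  unfold pdt
  rw [fderiv_fun_mul (sm_diff hf p) (sm_diff hg p)]; simp

lemma pdx_mul (j : Fin d) {f g : ℝ × (Fin d → ℝ) → ℝ} (hf : ContDiff ℝ (⊤ : ℕ∞) f)
    (hg : ContDiff ℝ (⊤ : ℕ∞) g) (p) :
    pdx j (fun p => f p * g p) p = f p * pdx j g p + g p * pdx j f p := by
  unfold pdx
  rw [fderiv_fun_mul (sm_diff hf p) (sm_diff hg p)]; simp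

lemma pdt_add {f g : ℝ × (Fin d → ℝ) → ℝ} (hf : ContDiff ℝ (⊤ : ℕ∞) f)
    (hg : ContDiff ℝ (⊤ : ℕ∞) g) (p) :
    pdt (fun p => f p + g p) p = pdt f p + pdt g p := by
  unfold pdt
  rw [fderiv_fun_add (sm_diff hf p) (sm_diff hg p)]; simp

lemma pdx_add (j : Fin d) {f g : ℝ × (Fin d → ℝ) → ℝ} (hf : ContDiff ℝ (⊤ : ℕ∞) f)
    (hg : ContDiff ℝ (⊤ : ℕ∞) g) (p) :
    pdx j (fun p => f p + g p) p = pdx j f p + pdx j g p := by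
  unfold pdx
  rw [fderiv_fun_add (sm_diff hf p) (sm_diff hg p)]; simp

lemma pdt_sub {f g : ℝ × (Fin d → ℝ) → ℝ} (hf : ContDiff ℝ (⊤ : ℕ∞) f)
    (hg : ContDiff ℝ (⊤ : ℕ∞) g) (p) :
    pdt (fun p => f p - g p) p = pdt f p - pdt g p := by
  unfold pdt
  rw [fderiv_fun_sub (sm_diff hf p) (sm_diff hg p)]; simp

lemma pdx_sub (j : Fin d) {f g : ℝ × (Fin d → ℝ) → ℝ} (hf : ContDiff ℝ (⊤ : ℕ∞) f)
    (hg : ContDiff ℝ (⊤ : ℕ∞) g) (p) :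
    pdx j (fun p => f p - g p) p = pdx j f p - pdx j g p := by
  unfold pdx
  rw [fderiv_fun_sub (sm_diff hf p) (sm_diff hg p)]; simp

lemma pdx_sum {ι : Type*} (s : Finset ι) (j : Fin d) {f : ι → ℝ × (Fin d → ℝ) → ℝ}
    (hf : ∀ i, ContDiff ℝ (⊤ : ℕ∞) (f i)) (p) :
    pdx j (fun p => ∑ i ∈ s, f i p) p = ∑ i ∈ s, pdx j (f i) p := by
  unfold pdx
  rw [fderiv_fun_sum (fun i _ => sm_diff (hf i) p)]; simp

lemma pdt_sum {ι : Type*} (s : Finset ι) {f : ι → ℝ × (Fin d → ℝ) → ℝ}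
    (hf : ∀ i, ContDiff ℝ (⊤ : ℕ∞) (f i)) (p) :
    pdt (fun p => ∑ i ∈ s, f i p) p = ∑ i ∈ s, pdt (f i) p := by
  unfold pdt
  rw [fderiv_fun_sum (fun i _ => sm_diff (hf i) p)]; simp

/-- coefficient functions -/
lemma coef_smooth (e : Fin d) {c : ℝ → ℝ} (hc : ContDiff ℝ (⊤ : ℕ∞) c) :
    ContDiff ℝ (⊤ : ℕ∞) (fun p : ℝ × (Fin d → ℝ) => c (p.2 e)) := by
  fun_prop

lemma coef_fderiv (e : Fin d) {c : ℝ → ℝ} (hc : ContDiff ℝ (⊤ : ℕ∞) c)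
    (p ξ : ℝ × (Fin d → ℝ)) :
    fderiv ℝ (fun p : ℝ × (Fin d → ℝ) => c (p.2 e)) p ξ = ξ.2 e * deriv c (p.2 e) := by
  have h1 : HasFDerivAt (fun p : ℝ × (Fin d → ℝ) => p.2 e)
      ((ContinuousLinearMap.proj (R := ℝ) (φ := fun _ : Fin d => ℝ) e).comp
        (ContinuousLinearMap.snd ℝ ℝ (Fin d → ℝ))) p :=
    ((ContinuousLinearMap.proj (R := ℝ) (φ := fun _ : Fin d => ℝ) e).comp
        (ContinuousLinearMap.snd ℝ ℝ (Fin d → ℝ))).hasFDerivAt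
  have h2 : HasDerivAt c (deriv c (p.2 e)) (p.2 e) :=
    (hc.differentiable (by simp) _).hasDerivAt
  have := h2.comp_hasFDerivAt p h1
  have h3 := this.fderiv
  simp only [Function.comp_def] at h3
  rw [h3]; simp [mul_comm]

lemma coef_pdt (e : Fin d) {c : ℝ → ℝ} (hc : ContDiff ℝ (⊤ : ℕ∞) c) (p) :
    pdt (fun p : ℝ × (Fin d → ℝ) => c (p.2 e)) p = 0 := by
  unfold pdt; rw [coef_fderiv e hc]; simp

lemma coef_pdx (e k : Fin d) (hk : k ≠ e) {c : ℝ → ℝ} (hc : ContDiff ℝ (⊤ : ℕ∞) c) (p) :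
    pdx k (fun p : ℝ × (Fin d → ℝ) => c (p.2 e)) p = 0 := by
  unfold pdx; rw [coef_fderiv e hc]; simp [hk.symm]

lemma fun_t_pdx (k : Fin d) {c : ℝ → ℝ} (hc : ContDiff ℝ (⊤ : ℕ∞) c) (p) :
    pdx k (fun p : ℝ × (Fin d → ℝ) => c p.1) p = 0 ∧
    pdt (fun p : ℝ × (Fin d → ℝ) => c p.1) p = deriv c p.1 := by
  have h1 : HasFDerivAt (fun p : ℝ × (Fin d → ℝ) => p.1)
        (ContinuousLinearMap.fst ℝ ℝ (Fin d → ℝ)) p :=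
    (ContinuousLinearMap.fst ℝ ℝ (Fin d → ℝ)).hasFDerivAt
  have h2 : HasDerivAt c (deriv c (p.1)) (p.1) :=
    (hc.differentiable (by simp) _).hasDerivAt
  have h3 := (h2.comp_hasFDerivAt p h1).fderiv
  simp only [Function.comp_def] at h3
  unfold pdx pdt
  rw [h3]; simp

/-! Domains -/
lemma ballE_open (R : ℝ) : IsOpen (ballE d R) := by
  unfold ballE; exact isOpen_lt (by fun_prop) (by fun_prop)

lemma Qc_open (R : ℝ) : IsOpen (Qc d R) := isOpen_Ioo.prod (ballE_open R)

lemma ballE_sub (R : ℝ) : ballE d R ⊆ Set.Icc (fun _ => -|R|) (fun _ => |R|) := by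
  intro x hx
  have : ∀ j, |x j| ≤ |R| := by
    intro j
    have h1 : (x j)^2 ≤ ∑ j, (x j)^2 :=
      Finset.single_le_sum (f := fun j => (x j)^2) (fun i _ => sq_nonneg _) (Finset.mem_univ j)
    exact sq_le_sq.mp (h1.trans (le_of_lt hx))
  exact ⟨fun j => (abs_le.mp (this j)).1, fun j => (abs_le.mp (this j)).2⟩

lemma intB {f : (Fin d → ℝ) → ℝ} (hf : Continuous f) (R : ℝ) : IntegrableOn f (ballE d R) :=
  (hf.continuousOn.integrableOn_compact isCompact_Icc).mono_set (ballE_sub R)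

lemma intQ {f : ℝ × (Fin d → ℝ) → ℝ} (hf : Continuous f) (R : ℝ) : IntegrableOn f (Qc d R) := by
  refine (hf.continuousOn.integrableOn_compact
    ((isCompact_Icc (a := (0:ℝ)) (b := R^2)).prod
      (isCompact_Icc (a := (fun _ : Fin d => -|R|)) (b := fun _ => |R|)))).mono_set ?_
  exact Set.prod_mono Set.Ioo_subset_Icc_self (ballE_sub R)

lemma Qc_mono {r R : ℝ} (h0 : 0 ≤ r) (h : r ≤ R) : Qc d r ⊆ Qc d R := by
  have : r ^ 2 ≤ R ^ 2 := by gcongr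
  rintro ⟨t, x⟩ ⟨h1, h2⟩
  exact ⟨⟨h1.1, h1.2.trans_le this⟩, lt_of_lt_of_le h2 this⟩

/-- integral over ball of a partial derivative -/
lemma int_ball_pd (R : ℝ) (j : Fin d) (g : (Fin d → ℝ) → ℝ) (hg : ContDiff ℝ (⊤ : ℕ∞) g)
    (h0 : ∀ x ∈ sphereE d R, g x = 0) :
    ∫ x in ballE d R, fderiv ℝ g x (Pi.single j 1) = 0 := by
  obtain _ | n := d
  · exact j.elim0
  have hcont : Continuous (fun x => fderiv ℝ g x (Pi.single j 1)) := by
    exact ((hg.fderiv_right (m := (⊤ : ℕ∞)) (by simp)).clm_apply contDiff_const).continuous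
  set F : (Fin (n+1) → ℝ) → ℝ := (ballE (n+1) R).indicator (fun x => fderiv ℝ g x (Pi.single j 1))
    with hF
  have hFi : Integrable F := (intB hcont R).integrable_indicator (ballE_open R).measurableSet
  rw [← integral_indicator (ballE_open R).measurableSet, ← hF]
  have hmp := (volume_preserving_piFinSuccAbove (fun _ : Fin (n+1) => ℝ) j).symm
  rw [← hmp.integral_comp' F]
  have hFi2 := (hmp.integrable_comp_emb (MeasurableEquiv.measurableEmbedding _)).2 hFi
  simp only [Function.comp_def] at hFi2
  rw [Measure.volume_eq_prod, integral_prod_symm _ hFi2]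
  rw [integral_eq_zero_of_ae]
  filter_upwards with y
  change ∫ s : ℝ, F (j.insertNth s y) = 0
  set c := Real.sqrt (R^2 - ∑ i, (y i)^2) with hc
  have hmem : ∀ s : ℝ, (j.insertNth s y : Fin (n+1) → ℝ) ∈ ballE (n+1) R ↔ s ∈ Set.Ioo (-c) c := by
    intro s
    simp only [ballE, Set.mem_ofPred_eq, Fin.sum_univ_succAbove _ j, Fin.insertNth_apply_same,
      Fin.insertNth_apply_succAbove, Set.mem_Ioo]
    rw [← abs_lt, hc, Real.lt_sqrt (abs_nonneg _), sq_abs]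
    constructor <;> intro h <;> linarith
  have : ∀ s : ℝ, F (j.insertNth s y) = (Set.Ioo (-c) c).indicator
      (fun s => fderiv ℝ g (j.insertNth s y) (Pi.single j 1)) s := by
    intro s
    by_cases hs : s ∈ Set.Ioo (-c) c
    · rw [hF, Set.indicator_of_mem ((hmem s).2 hs), Set.indicator_of_mem hs]
    · rw [hF, Set.indicator_of_notMem (fun h => hs ((hmem s).1 h)), Set.indicator_of_notMem hs]
  have hc0 : 0 ≤ c := Real.sqrt_nonneg _
  simp_rw [this]
  rw [integral_indicator measurableSet_Ioo, ← integral_Ioc_eq_integral_Ioo,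
    ← intervalIntegral.integral_of_le (by linarith)]
  have hder : ∀ s : ℝ, HasDerivAt (fun s : ℝ => g (j.insertNth s y))
      (fderiv ℝ g (j.insertNth s y) (Pi.single j 1)) s := by
    intro s
    have h1 : HasDerivAt (fun s : ℝ => (j.insertNth s y : Fin (n+1) → ℝ)) (Pi.single j 1) s := by
      rw [hasDerivAt_pi]
      intro i
      refine Fin.succAboveCases j ?_ (fun i => ?_) i
      · simpa using hasDerivAt_id' s
      · simpa using hasDerivAt_const s (y i)
    exact ((hg.differentiable (by simp)) _).hasFDerivAt.comp_hasDerivAt s h1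
  have hci : Continuous (fun s : ℝ => (j.insertNth s y : Fin (n+1) → ℝ)) := by
    fun_prop
  rw [intervalIntegral.integral_eq_sub_of_hasDerivAt (fun s _ => hder s)
    ((hcont.comp hci).intervalIntegrable _ _)]
  rcases le_or_gt (R^2 - ∑ i, (y i)^2) 0 with hneg | hpos
  · have : c = 0 := Real.sqrt_eq_zero_of_nonpos hneg
    rw [this]; simp
  · have hsq : c^2 = R^2 - ∑ i, (y i)^2 := Real.sq_sqrt hpos.le
    rw [h0, h0]; · simp
    all_goals
      simp only [sphereE, Set.mem_ofPred_eq, Fin.sum_univ_succAbove _ j, Fin.insertNth_apply_same,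
        Fin.insertNth_apply_succAbove]
      linarith [neg_sq c]

lemma int_pdx (R : ℝ) (j : Fin d) (G : ℝ × (Fin d → ℝ) → ℝ) (hG : ContDiff ℝ (⊤ : ℕ∞) G)
    (h0 : ∀ t ∈ Set.Ioo 0 (R^2), ∀ x ∈ sphereE d R, G (t, x) = 0) :
    ∫ p in Qc d R, pdx j G p = 0 := by
  have hi := intQ (pdx_smooth j hG).continuous R
  unfold Qc at *
  rw [Measure.volume_eq_prod] at *
  rw [setIntegral_prod _ hi]
  apply setIntegral_eq_zero_of_forall_eq_zero
  intro t ht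
  rw [← int_ball_pd R j (fun x => G (t, x)) (by fun_prop) (h0 t ht)]
  congr 1
  funext x
  have h1 : HasFDerivAt (fun x : Fin d → ℝ => (t, x)) (ContinuousLinearMap.inr ℝ ℝ (Fin d → ℝ)) x :=
    hasFDerivAt_prodMk_right t x
  have := ((sm_diff hG (t, x)).hasFDerivAt.comp x h1).fderiv
  simp only [Function.comp_def] at this
  rw [this]; simp [pdx]

lemma int_pdt (R : ℝ) (G : ℝ × (Fin d → ℝ) → ℝ) (hG : ContDiff ℝ (⊤ : ℕ∞) G)
    (h0 : ∀ x ∈ ballE d R, G (R^2, x) = 0) (h1 : ∀ x ∈ ballE d R, 0 ≤ G (0, x)) :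
    ∫ p in Qc d R, pdt G p ≤ 0 := by
  have hi := intQ (pdt_smooth hG).continuous R
  have hi' := hi
  unfold Qc at *
  rw [Measure.volume_eq_prod] at *
  rw [IntegrableOn, ← Measure.prod_restrict] at hi
  rw [← Measure.prod_restrict, integral_prod_symm _ hi]
  apply setIntegral_nonpos (ballE_open R).measurableSet
  intro x hx
  have hder : ∀ t : ℝ, HasDerivAt (fun t => G (t, x)) (pdt G (t, x)) t := by
    intro t
    have h2 : HasDerivAt (fun t : ℝ => (t, x)) ((1 : ℝ), (0 : Fin d → ℝ)) t :=
      (hasDerivAt_id t).prodMk (hasDerivAt_const t x)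
    exact (sm_diff hG _).hasFDerivAt.comp_hasDerivAt t h2
  rw [← integral_Ioc_eq_integral_Ioo, ← intervalIntegral.integral_of_le (by positivity),
    intervalIntegral.integral_eq_sub_of_hasDerivAt (fun s _ => hder s)]
  · rw [h0 x hx]; linarith [h1 x hx]
  · exact Continuous.intervalIntegrable
      ((pdt_smooth hG).continuous.comp (by fun_prop)) _ _

/-- The divergence lemma. -/
lemma div_lemma (R : ℝ) (G : ℝ × (Fin d → ℝ) → ℝ) (H : Fin d → ℝ × (Fin d → ℝ) → ℝ)
    (hG : ContDiff ℝ (⊤ : ℕ∞) G) (hH : ∀ k, ContDiff ℝ (⊤ : ℕ∞) (H k))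
    (h0 : ∀ x ∈ ballE d R, G (R^2, x) = 0) (h1 : ∀ x ∈ ballE d R, 0 ≤ G (0, x))
    (h2 : ∀ k, ∀ t ∈ Set.Ioo 0 (R^2), ∀ x ∈ sphereE d R, H k (t, x) = 0)
    (A B : ℝ × (Fin d → ℝ) → ℝ) (hA : Continuous A) (hB : Continuous B)
    (hle : ∀ p ∈ Qc d R, A p - B p ≤ pdt G p + ∑ k, pdx k (H k) p) :
    ∫ p in Qc d R, A p ≤ ∫ p in Qc d R, B p := by
  have hs : ∀ k, IntegrableOn (pdx k (H k)) (Qc d R) :=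
    fun k => intQ (pdx_smooth k (hH k)).continuous R
  have e1 : ∫ p in Qc d R, (pdt G p + ∑ k, pdx k (H k) p) ≤ 0 := by
    rw [integral_add (intQ (pdt_smooth hG).continuous R)
      (integrable_finsetSum _ (fun k _ => hs k)), integral_finsetSum _ (fun k _ => hs k),
      Finset.sum_eq_zero (fun k _ => int_pdx R k (H k) (hH k) (h2 k))]
    simpa using int_pdt R G hG h0 h1
  have e2 : ∫ p in Qc d R, (A p - B p) ≤ ∫ p in Qc d R, (pdt G p + ∑ k, pdx k (H k) p) :=
    setIntegral_mono_on (intQ (hA.sub hB) R)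
      ((intQ (pdt_smooth hG).continuous R).add (integrable_finsetSum _ (fun k _ => hs k)))
      (Qc_open R).measurableSet hle
  rw [integral_sub (intQ hA R) (intQ hB R)] at e2
  linarith

end basics


section energy
variable {d : ℕ}

structure Ell (d : ℕ) (δ : ℝ) (a : ℝ → Fin d → Fin d → ℝ) : Prop where
  hδ : δ ∈ Set.Ioo (0 : ℝ) 1
  sm : ∀ j k, ContDiff ℝ (⊤ : ℕ∞) fun s => a s j k
  sy : ∀ s j k, a s j k = a s k j
  el : ∀ (s : ℝ) (θ : Fin d → ℝ),
          δ * ∑ j, (θ j) ^ 2 ≤ ∑ j, ∑ k, a s j k * θ j * θ k ∧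
          ∑ j, ∑ k, a s j k * θ j * θ k ≤ δ⁻¹ * ∑ j, (θ j) ^ 2

noncomputable def Lop (e : Fin d) (a : ℝ → Fin d → Fin d → ℝ) (v : ℝ × (Fin d → ℝ) → ℝ) :
    ℝ × (Fin d → ℝ) → ℝ :=
  fun p => pdt v p + ∑ j, ∑ k, a (p.2 e) j k * pdxx j k v p

noncomputable def rho (e : Fin d) (a : ℝ → Fin d → Fin d → ℝ) (s : ℝ) : ℝ := (a s e e)⁻¹

noncomputable def Bc (e : Fin d) (a : ℝ → Fin d → Fin d → ℝ) (k j : Fin d) (s : ℝ) : ℝ :=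
  if k = e then (if j = e then 1 else 0)
  else (if j = e then 2 * (rho e a s * a s k e) else rho e a s * a s k j)

variable {δ : ℝ} {a : ℝ → Fin d → Fin d → ℝ}

lemma Ell.diag (h : Ell d δ a) (s : ℝ) (j : Fin d) : δ ≤ a s j j ∧ a s j j ≤ δ⁻¹ := by
  have := h.el s (Pi.single j 1)
  simpa [Pi.single_apply, ite_pow] using this

lemma Ell.abs_le (h : Ell d δ a) (s : ℝ) (j k : Fin d) : |a s j k| ≤ δ⁻¹ := by
  by_cases hjk : j = k
  · subst hjk
    have := h.diag s j
    rw [abs_of_nonneg (h.hδ.1.le.trans this.1)]; exact this.2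
  have key : ∀ σ : ℝ, ∑ i, ∑ l, a s i l * (Pi.single j 1 + σ • Pi.single k 1 : Fin d → ℝ) i
        * (Pi.single j 1 + σ • Pi.single k 1 : Fin d → ℝ) l
      = a s j j + σ^2 * a s k k + 2 * σ * a s j k := by
    intro σ
    simp [Pi.single_apply, mul_add, add_mul, Finset.sum_add_distrib]
    rw [h.sy s k j]; ring
  have hn : ∀ σ : ℝ, 0 ≤ ∑ i, ((Pi.single j 1 + σ • Pi.single k 1 : Fin d → ℝ) i)^2 :=
    fun σ => Finset.sum_nonneg (fun i _ => sq_nonneg _)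
  have h1 := (h.el s (Pi.single j 1 + (1:ℝ) • Pi.single k 1)).1
  have h2 := (h.el s (Pi.single j 1 + (-1:ℝ) • Pi.single k 1)).1
  rw [key] at h1 h2
  have m1 := mul_nonneg h.hδ.1.le (hn 1)
  have m2 := mul_nonneg h.hδ.1.le (hn (-1))
  have d1 := (h.diag s j).2
  have d2 := (h.diag s k).2
  rw [_root_.abs_le]
  constructor <;> linarith

lemma Ell.rho_bd (h : Ell d δ a) (e : Fin d) (s : ℝ) :
    δ ≤ rho e a s ∧ rho e a s ≤ δ⁻¹ ∧ 0 < rho e a s ∧ rho e a s * a s e e = 1 := by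
  have h1 := h.diag s e
  have h0 := h.hδ.1
  have hp : 0 < a s e e := h0.trans_le h1.1
  unfold rho
  refine ⟨?_, ?_, by positivity, by field_simp⟩
  · rw [le_inv_comm₀ h0 hp]; exact h1.2
  · gcongr; exact h1.1

lemma Ell.rho_sm (h : Ell d δ a) (e : Fin d) : ContDiff ℝ (⊤ : ℕ∞) (rho e a) := by
  unfold rho
  exact (h.sm e e).inv (fun s => (h.hδ.1.trans_le (h.diag s e).1).ne')

lemma Ell.Bc_sm (h : Ell d δ a) (e k j : Fin d) : ContDiff ℝ (⊤ : ℕ∞) (Bc e a k j) := by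
  unfold Bc
  have h1 := h.rho_sm e
  have h2 := h.sm
  split_ifs <;> first | exact contDiff_const | skip
  · exact contDiff_const.mul (h1.mul (h2 k e))
  · exact h1.mul (h2 k j)

lemma Ell.Bc_abs (h : Ell d δ a) (e k j : Fin d) (s : ℝ) : |Bc e a k j s| ≤ 2 * δ⁻¹ * δ⁻¹ := by
  have h0 := h.hδ.1
  have h1 : 1 ≤ δ⁻¹ := (one_le_inv₀ h0).2 h.hδ.2.le
  have h2 := h.rho_bd e s
  have h3 : ∀ k j, |rho e a s * a s k j| ≤ δ⁻¹ * δ⁻¹ := by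
    intro k j
    rw [abs_mul, abs_of_pos h2.2.2.1]
    exact mul_le_mul h2.2.1 (h.abs_le s k j) (abs_nonneg _) (by linarith)
  unfold Bc
  split_ifs
  · rw [abs_one]; nlinarith
  · rw [abs_zero]; positivity
  · rw [abs_mul, abs_two]; have := h3 k e; linarith
  · have := h3 k j; nlinarith

lemma Ell.Bc_pdx (h : Ell d δ a) (e k j : Fin d) {g : ℝ × (Fin d → ℝ) → ℝ}
    (hg : ContDiff ℝ (⊤ : ℕ∞) g) (p) :
    pdx k (fun p => Bc e a k j (p.2 e) * g p) p = Bc e a k j (p.2 e) * pdx k g p := by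
  rw [pdx_mul k (coef_smooth e (h.Bc_sm e k j)) hg]
  have : pdx k (fun p : ℝ × (Fin d → ℝ) => Bc e a k j (p.2 e)) p = 0 := by
    by_cases hk : k = e
    · unfold Bc; simp only [hk, if_true]; unfold pdx; simp
    · exact coef_pdx e k hk (h.Bc_sm e k j) p
  rw [this]; ring

lemma Ell.Bc_sum (h : Ell d δ a) (e : Fin d) (s : ℝ) (S : Fin d → Fin d → ℝ)
    (hS : ∀ j k, S j k = S k j) :
    ∑ k, ∑ j, Bc e a k j s * S k j = rho e a s * ∑ j, ∑ k, a s j k * S j k := by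
  have anti : ∀ k j, (Bc e a k j s - rho e a s * a s k j) = - (Bc e a j k s - rho e a s * a s j k) := by
    intro k j
    have h1 := (h.rho_bd e s).2.2.2
    unfold Bc
    by_cases hk : k = e <;> by_cases hj : j = e
    · subst hk; subst hj; simp [h1]
    · subst hk; simp [hj]; rw [h.sy s k j]; ring
    · subst hj; simp [hk]; rw [h.sy s k j]; ring
    · simp [hk, hj]
  have z : ∑ k, ∑ j, (Bc e a k j s - rho e a s * a s k j) * S k j = 0 := by
    have : ∑ k, ∑ j, (Bc e a k j s - rho e a s * a s k j) * S k j
        = - ∑ k, ∑ j, (Bc e a k j s - rho e a s * a s k j) * S k j := by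
      conv_lhs => rw [Finset.sum_comm]
      rw [← Finset.sum_neg_distrib]
      refine Finset.sum_congr rfl fun k _ => ?_
      rw [← Finset.sum_neg_distrib]
      refine Finset.sum_congr rfl fun j _ => ?_
      rw [anti j k, hS j k]; ring
    linarith
  simp only [sub_mul, Finset.sum_sub_distrib] at z
  rw [Finset.mul_sum]
  simp_rw [Finset.mul_sum]
  simp_rw [mul_assoc] at z
  linarith

/-- the basic energy inequality -/
lemma energy (h : Ell d δ a) (e : Fin d) (R : ℝ) (v ψ : ℝ × (Fin d → ℝ) → ℝ)
    (hv : ContDiff ℝ (⊤ : ℕ∞) v) (hψ : ContDiff ℝ (⊤ : ℕ∞) ψ)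
    (h0 : ∀ x ∈ ballE d R, 0 ≤ ψ (0, x))
    (h1 : ∀ x ∈ ballE d R, ψ (R^2, x) * v (R^2, x) = 0)
    (h2 : ∀ t ∈ Set.Ioo 0 (R^2), ∀ x ∈ sphereE d R, ψ (t, x) * v (t, x) = 0)
    (E : Fin d → ℝ × (Fin d → ℝ) → ℝ) (hE : ∀ k, ContDiff ℝ (⊤ : ℕ∞) (E k))
    (hE2 : ∀ k, ∀ t ∈ Set.Ioo 0 (R^2), ∀ x ∈ sphereE d R, E k (t, x) = 0)
    (A B : ℝ × (Fin d → ℝ) → ℝ) (hA : Continuous A) (hB : Continuous B)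
    (hle : ∀ p ∈ Qc d R, A p - B p ≤
      2 * ψ p * v p * rho e a (p.2 e) * Lop e a v p
      + 2 * ψ p * (rho e a (p.2 e) * ∑ j, ∑ k, a (p.2 e) j k * (pdx j v p * pdx k v p))
      + (∑ k, ∑ j, 2 * v p * pdx k ψ p * Bc e a k j (p.2 e) * pdx j v p)
      + rho e a (p.2 e) * pdt ψ p * (v p)^2 + ∑ k, pdx k (E k) p) :
    ∫ p in Qc d R, A p ≤ ∫ p in Qc d R, B p := by
  have hr := coef_smooth e (h.rho_sm e)
  have hvj := fun j => pdx_smooth j hv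
  have hflux : ∀ j, ContDiff ℝ (⊤ : ℕ∞) (fun p => 2 * (ψ p * (v p * pdx j v p))) := by
    intro j
    have := hvj j
    fun_prop
  have hBs : ∀ k j, ContDiff ℝ (⊤ : ℕ∞)
      (fun p : ℝ × (Fin d → ℝ) => Bc e a k j (p.2 e) * (2 * (ψ p * (v p * pdx j v p)))) :=
    fun k j => (coef_smooth e (h.Bc_sm e k j)).mul (hflux j)
  have hSs : ∀ k, ContDiff ℝ (⊤ : ℕ∞) (fun p : ℝ × (Fin d → ℝ) =>
      ∑ j, Bc e a k j (p.2 e) * (2 * (ψ p * (v p * pdx j v p)))) :=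
    fun k => ContDiff.sum (fun j _ => hBs k j)
  refine div_lemma R (fun p => rho e a (p.2 e) * (ψ p * (v p * v p)))
    (fun k p => (∑ j, Bc e a k j (p.2 e) * (2 * (ψ p * (v p * pdx j v p)))) + E k p)
    (hr.mul (hψ.mul (hv.mul hv))) (fun k => (hSs k).add (hE k)) ?_ ?_ ?_ A B hA hB ?_
  · intro x hx
    have := h1 x hx
    simp only
    rw [← mul_assoc (ψ _), this]; ring
  · intro x hx
    have := (h.rho_bd e (x e)).2.2.1
    have := h0 x hx
    have := mul_self_nonneg (v (0,x))
    simp only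
    positivity
  · intro k t ht x hx
    simp only [hE2 k t ht x hx, add_zero]
    apply Finset.sum_eq_zero
    intro j _
    rw [← mul_assoc (ψ _), h2 t ht x hx]; ring
  · intro p hp
    refine (hle p hp).trans (le_of_eq ?_)
    have e1 : pdt (fun p => rho e a (p.2 e) * (ψ p * (v p * v p))) p
        = rho e a (p.2 e) * (ψ p * (2 * v p * pdt v p) + v p ^ 2 * pdt ψ p) := by
      rw [pdt_mul hr (hψ.mul (hv.mul hv)), pdt_mul hψ (hv.mul hv), pdt_mul hv hv,
        coef_pdt e (h.rho_sm e)]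
      ring
    have e2 : ∀ k, pdx k (fun p => (∑ j, Bc e a k j (p.2 e) * (2 * (ψ p * (v p * pdx j v p)))) + E k p) p
        = 2 * ψ p * v p * (∑ j, Bc e a k j (p.2 e) * pdxx k j v p)
          + 2 * ψ p * (∑ j, Bc e a k j (p.2 e) * (pdx k v p * pdx j v p))
          + (∑ j, 2 * v p * pdx k ψ p * Bc e a k j (p.2 e) * pdx j v p) + pdx k (E k) p := by
      intro k
      rw [pdx_add k (hSs k) (hE k), pdx_sum _ k (hBs k)]
      congr 1
      rw [Finset.mul_sum, Finset.mul_sum, ← Finset.sum_add_distrib, ← Finset.sum_add_distrib]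
      refine Finset.sum_congr rfl fun j _ => ?_
      rw [h.Bc_pdx e k j (hflux j), pdx_mul k contDiff_const (hψ.mul (hv.mul (hvj j))),
        pdx_mul k hψ (hv.mul (hvj j)), pdx_mul k hv (hvj j)]
      have : pdx k (fun _ : ℝ × (Fin d → ℝ) => (2:ℝ)) p = 0 := by unfold pdx; simp
      rw [this]
      unfold pdxx
      ring
    rw [e1]
    simp_rw [e2]
    rw [Finset.sum_add_distrib, Finset.sum_add_distrib, Finset.sum_add_distrib,
      ← Finset.mul_sum, ← Finset.mul_sum,
      h.Bc_sum e (p.2 e) (fun k j => pdxx k j v p) (fun j k => congrFun (pdx_pdx hv j k) p),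
      h.Bc_sum e (p.2 e) (fun k j => pdx k v p * pdx j v p) (fun j k => mul_comm _ _)]
    unfold Lop
    ring

lemma Ell.quad (h : Ell d δ a) (e : Fin d) (s : ℝ) (θ : Fin d → ℝ) :
    δ^2 * ∑ j, (θ j)^2 ≤ rho e a s * ∑ j, ∑ k, a s j k * (θ j * θ k) := by
  have h1 := (h.el s θ).1
  have h2 := h.rho_bd e s
  have h3 : 0 ≤ ∑ j, (θ j)^2 := Finset.sum_nonneg (fun j _ => sq_nonneg _)
  simp_rw [mul_assoc] at h1
  have h0 := h.hδ.1
  calc δ^2 * ∑ j, (θ j)^2 = δ * (δ * ∑ j, (θ j)^2) := by ring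
    _ ≤ rho e a s * (δ * ∑ j, (θ j)^2) := by gcongr; exact h2.1
    _ ≤ _ := by have := h2.2.2.1; gcongr

/-- C0 -/
lemma C0 (h : Ell d δ a) (e : Fin d) (w : ℝ × (Fin d → ℝ) → ℝ)
    (hw : ContDiff ℝ (⊤ : ℕ∞) w) (hb : ∀ p ∈ pbQc d 4, w p = 0) :
    ∫ p in Qc d 4, (δ/4 * (w p)^2 + 2 * δ^2 * ∑ j, (pdx j w p)^2) ≤
      ∫ p in Qc d 4, (2000 * δ⁻¹ ^ 3) * (Lop e a w p)^2 := by
  have hd0 := h.hδ.1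
  have hLc : Continuous (Lop e a w) := by
    unfold Lop
    have h1 := (pdt_smooth hw).continuous
    have h2 := fun j k => (pdx_smooth j (pdx_smooth k hw)).continuous
    have h3 := fun j k => (coef_smooth e (h.sm j k)).continuous
    exact h1.add (continuous_finsetSum _ fun j _ => continuous_finsetSum _ fun k _ =>
      (h3 j k).mul (h2 j k))
  have h2 := fun j => (pdx_smooth j hw).continuous
  have h3 := hw.continuous
  have hψ : ContDiff ℝ (⊤ : ℕ∞) (fun t : ℝ => 1 + t) := by fun_prop
  refine energy h e 4 w (fun p => 1 + p.1) hw (by fun_prop) (by simp) ?_ ?_ (fun _ _ => 0)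
    (fun _ => contDiff_const) (by simp) _ _ (by fun_prop) (by fun_prop) ?_
  · intro x hx
    rw [hb _ (Or.inr ⟨Set.mem_singleton _, hx⟩)]; ring
  · intro t ht x hx
    rw [hb _ (Or.inl ⟨⟨ht.1.le, ht.2.le⟩, hx⟩)]; ring
  · intro p hp
    have e1 : ∀ k, pdx k (fun p : ℝ × (Fin d → ℝ) => 1 + p.1) p = 0 := fun k => (fun_t_pdx k hψ p).1
    have e2 : pdt (fun p : ℝ × (Fin d → ℝ) => 1 + p.1) p = 1 := by
      rw [(fun_t_pdx e hψ p).2]; simp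
    have e3 : ∀ k, pdx k (fun _ : ℝ × (Fin d → ℝ) => (0:ℝ)) p = 0 := by
      intro k; unfold pdx; simp
    simp only [e1, e2, e3]
    simp only [mul_zero, zero_mul, Finset.sum_const_zero, add_zero, mul_one]
    have hq := h.quad e (p.2 e) (fun j => pdx j w p)
    obtain ⟨r1, r2, r3, -⟩ := h.rho_bd e (p.2 e)
    set ρ := rho e a (p.2 e)
    set Q := ∑ j, ∑ k, a (p.2 e) j k * (pdx j w p * pdx k w p)
    set P := ∑ j, (pdx j w p)^2
    set L := Lop e a w p
    have hP : 0 ≤ P := Finset.sum_nonneg (fun j _ => sq_nonneg _)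
    have ht1 : 0 < p.1 := hp.1.1
    have ht2 : p.1 < 16 := by have := hp.1.2; norm_num at this; exact this
    have i1 : δ^2 * P ≤ (1 + p.1) * (ρ * Q) := by
      have : 0 ≤ ρ * Q := le_trans (by positivity) hq
      nlinarith
    have i2 : δ * w p^2 ≤ ρ * w p ^2 := by gcongr
    have i3 : -(δ/2 * w p^2 + 2000 * δ⁻¹^3 * L^2) ≤ 2 * (1+p.1) * w p * ρ * L := by
      set c := (1+p.1)*ρ with hc
      have hc0 : 0 ≤ c := by positivity
      have hc1 : c ≤ 17 * δ⁻¹ := by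
        rw [hc]; exact mul_le_mul (by linarith) r2 r3.le (by norm_num)
      have hc2 : c^2 ≤ (17*δ⁻¹)^2 := by gcongr
      have hy : 0 ≤ (δ * w p + 2 * c * L)^2 := sq_nonneg _
      have : 2 * (1+p.1) * w p * ρ * L = δ⁻¹ * (2 * (δ * w p) * (c * L)) := by
        rw [hc]; field_simp
      rw [this]
      have h5 : -( (δ * w p)^2/2 + 2 * c^2*L^2) ≤ 2 * (δ * w p) * (c * L) := by nlinarith
      have h6 : c^2 * L^2 ≤ (17*δ⁻¹)^2 * L^2 := by gcongr
      have h7 : δ⁻¹ * -( (δ * w p)^2/2 + 2 * (17*δ⁻¹)^2*L^2) ≤ δ⁻¹ * (2 * (δ * w p) * (c * L)) := by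
        apply mul_le_mul_of_nonneg_left _ (by positivity)
        linarith
      refine le_trans ?_ h7
      have h8 : δ⁻¹ * (δ * w p)^2 = δ * w p^2 := by field_simp
      have h9 : 0 ≤ δ⁻¹^3 * L^2 := by positivity
      nlinarith
    have i4 : 0 ≤ δ * w p^2 := by positivity
    nlinarith

end energy


section cac
variable {d : ℕ} {δ : ℝ} {a : ℝ → Fin d → Fin d → ℝ}

noncomputable def zet (R : ℝ) (p : ℝ × (Fin d → ℝ)) : ℝ := (R^2 - ∑ i, (p.2 i)^2) * (R^2 - p.1)

lemma zet_sm (R : ℝ) : ContDiff ℝ (⊤ : ℕ∞) (zet (d := d) R) := by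
  unfold zet; fun_prop

lemma zet_fd (R : ℝ) (p ξ : ℝ × (Fin d → ℝ)) : fderiv ℝ (zet (d := d) R) p ξ =
    (R^2 - ∑ i, (p.2 i)^2) * (- ξ.1) + (R^2 - p.1) * (- ∑ i, 2 * p.2 i * ξ.2 i) := by
  have h1 : ∀ i, HasFDerivAt (fun p : ℝ × (Fin d → ℝ) => p.2 i)
      ((ContinuousLinearMap.proj (R := ℝ) (φ := fun _ : Fin d => ℝ) i).comp
        (ContinuousLinearMap.snd ℝ ℝ (Fin d → ℝ))) p := fun i =>
    ((ContinuousLinearMap.proj (R := ℝ) (φ := fun _ : Fin d => ℝ) i).comp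
        (ContinuousLinearMap.snd ℝ ℝ (Fin d → ℝ))).hasFDerivAt
  have h2 : HasFDerivAt (fun p : ℝ × (Fin d → ℝ) => p.1)
        (ContinuousLinearMap.fst ℝ ℝ (Fin d → ℝ)) p :=
    (ContinuousLinearMap.fst ℝ ℝ (Fin d → ℝ)).hasFDerivAt
  have h3 := ((HasFDerivAt.fun_sum (u := Finset.univ) (fun i _ => (h1 i).pow 2)).const_sub (R^2)).mul
    (h2.const_sub (R^2))
  have h4 : fderiv ℝ (zet (d := d) R) p = _ := h3.fderiv
  rw [h4]
  simp

lemma zet_bd {R : ℝ} (h0 : 0 ≤ R) (hR : R ≤ 4) {p : ℝ × (Fin d → ℝ)} (hp : p ∈ Qc d R) :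
    0 ≤ zet R p ∧ zet R p ≤ 256 ∧ |pdt (zet R) p| ≤ 256 ∧ ∀ k, |pdx k (zet R) p| ≤ 256 := by
  obtain ⟨⟨t1, t2⟩, hx⟩ := hp
  have hx' : ∑ j, (p.2 j)^2 < R^2 := hx
  have hs : 0 ≤ ∑ j, (p.2 j)^2 := Finset.sum_nonneg (fun j _ => sq_nonneg _)
  have hR2 : R^2 ≤ 16 := by nlinarith
  refine ⟨?_, ?_, ?_, ?_⟩
  · unfold zet; apply mul_nonneg <;> linarith
  · unfold zet
    calc _ ≤ (16:ℝ) * 16 := by apply mul_le_mul <;> linarith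
      _ = _ := by norm_num
  · unfold pdt; rw [zet_fd, abs_le]; simp; constructor <;> linarith
  · intro k
    unfold pdx; rw [zet_fd]
    have : ∑ i, 2 * p.2 i * (Pi.single k (1:ℝ) : Fin d → ℝ) i = 2 * p.2 k := by
      simp [Pi.single_apply]
    simp only [this]
    have hk : (p.2 k)^2 ≤ 4^2 := by
      have := Finset.single_le_sum (f := fun j => (p.2 j)^2) (fun i _ => sq_nonneg _)
        (Finset.mem_univ k)
      linarith
    have hk2 := abs_le_of_sq_le_sq hk (by norm_num)
    rw [neg_zero, mul_zero, zero_add, abs_mul, abs_neg, abs_mul, abs_two,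
      abs_of_nonneg (by linarith : 0 ≤ R^2 - p.1)]
    have := mul_le_mul (by linarith : R^2 - p.1 ≤ 16) hk2 (abs_nonneg _) (by norm_num)
    linarith

lemma zet_low {r R : ℝ} (h0 : 0 ≤ r) (hr : r < R) {p : ℝ × (Fin d → ℝ)} (hp : p ∈ Qc d r) :
    (R^2 - r^2)^2 ≤ zet R p := by
  obtain ⟨⟨t1, t2⟩, hx⟩ := hp
  have hx' : ∑ j, (p.2 j)^2 < r^2 := hx
  have : r^2 < R^2 := by gcongr
  unfold zet
  rw [sq (R^2 - r^2)]
  apply mul_le_mul <;> linarith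

/-- passing from cutoff to smaller cylinder -/
lemma cut {r R : ℝ} (h0 : 0 ≤ r) (hr : r < R) {P : ℝ × (Fin d → ℝ) → ℝ} (hP : Continuous P)
    (hP0 : ∀ p, 0 ≤ P p) :
    ∫ p in Qc d r, P p ≤ ((R^2 - r^2)^4)⁻¹ * ∫ p in Qc d R, (zet R p)^2 * P p := by
  have hz := (zet_sm (d := d) R).continuous
  have hlt : 0 < R^2 - r^2 := by
    have : r^2 < R^2 := by gcongr
    linarith
  rw [← integral_const_mul]
  calc ∫ p in Qc d r, P p ≤ ∫ p in Qc d r, ((R^2 - r^2)^4)⁻¹ * ((zet R p)^2 * P p) := by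
        apply setIntegral_mono_on (intQ hP r) (intQ (by fun_prop) r) (Qc_open r).measurableSet
        intro p hp
        have h1 := zet_low h0 hr hp
        have h2 : (R^2-r^2)^4 ≤ (zet R p)^2 := by
          calc (R^2-r^2)^4 = ((R^2-r^2)^2)^2 := by ring
            _ ≤ _ := by gcongr
        rw [← mul_assoc]
        have h3 : 1 ≤ ((R^2 - r^2)^4)⁻¹ * (zet R p)^2 := by
          rw [inv_mul_eq_div, one_le_div (by positivity)]; exact h2
        nlinarith [hP0 p]
    _ ≤ _ := by
        apply setIntegral_mono_set (intQ (by fun_prop) R)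
        · filter_upwards with p
          have := hP0 p
          positivity
        · exact (Qc_mono h0 hr.le).eventuallyLE

lemma young (η x y : ℝ) (hη : 0 < η) : |2 * x * y| ≤ η * x^2 + η⁻¹ * y^2 := by
  have e1 : η * x^2 + η⁻¹ * y^2 - 2 * x * y = η⁻¹ * (η * x - y)^2 := by field_simp; ring
  have e2 : η * x^2 + η⁻¹ * y^2 + 2 * x * y = η⁻¹ * (η * x + y)^2 := by field_simp; ring
  have p1 : 0 ≤ η⁻¹ * (η * x - y)^2 := by positivity
  have p2 : 0 ≤ η⁻¹ * (η * x + y)^2 := by positivity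
  rw [abs_le]; constructor <;> linarith

lemma zet_top (R : ℝ) (x : Fin d → ℝ) : zet R (R^2, x) = 0 := by simp [zet]
lemma zet_lat (R t : ℝ) {x : Fin d → ℝ} (hx : x ∈ sphereE d R) : zet R (t, x) = 0 := by
  have : ∑ j, (x j)^2 = R^2 := hx
  simp [zet, this]

lemma C1 (d : ℕ) (δ : ℝ) (r R : ℝ) (h0 : 0 ≤ r) (hr : r < R) (hR : R ≤ 4) :
    ∃ N : ℝ, 0 ≤ N ∧ ∀ (a : ℝ → Fin d → Fin d → ℝ), Ell d δ a → ∀ e m : Fin d, m ≠ e →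
      ∀ v F : ℝ × (Fin d → ℝ) → ℝ, ContDiff ℝ (⊤ : ℕ∞) v → ContDiff ℝ (⊤ : ℕ∞) F →
      (∀ p ∈ Qc d R, Lop e a v p = pdx m F p) →
      ∫ p in Qc d r, ∑ j, (pdx j v p)^2 ≤ N * ∫ p in Qc d R, ((v p)^2 + (F p)^2) := by
  by_cases hδ : δ ∈ Set.Ioo (0:ℝ) 1
  swap
  · exact ⟨0, le_rfl, fun a h => absurd h.hδ hδ⟩
  have hd0 := hδ.1
  set b := 2 * δ⁻¹ * δ⁻¹ with hb
  have hb0 : 0 ≤ b := by positivity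
  set η := δ^2 / ((d:ℝ)+1) with hη
  have hη0 : 0 < η := by positivity
  set K1 := η⁻¹ * (2 * 256 * b)^2 with hK1
  set K2 := η⁻¹ * (256 * δ⁻¹)^2 with hK2
  set K3 := 2 * δ⁻¹ * 256^2 with hK3
  set C := (d:ℝ) * d * K1 + K2 + 2 * K3 with hC
  have hK1' : 0 ≤ K1 := by positivity
  have hK2' : 0 ≤ K2 := by positivity
  have hK3' : 0 ≤ K3 := by positivity
  refine ⟨((R^2 - r^2)^4)⁻¹ * ((δ^2)⁻¹ * C), by positivity, ?_⟩
  intro a h e m hme v F hv hF hL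
  have hvj := fun j => pdx_smooth j hv
  have hvc := fun j => (hvj j).continuous
  have hz := zet_sm (d := d) R
  have hzc := hz.continuous
  have hvcc := hv.continuous
  have hFc := hF.continuous
  have hr' := coef_smooth e (h.rho_sm e)
  have hmain : ∫ p in Qc d R, δ^2 * ((zet R p)^2 * ∑ j, (pdx j v p)^2) ≤
      ∫ p in Qc d R, C * ((v p)^2 + (F p)^2) := by
    have hprod : ContDiff ℝ (⊤ : ℕ∞) (fun p : ℝ × (Fin d → ℝ) =>
      rho e a (p.2 e) * (zet R p * (zet R p * (v p * F p)))) :=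
        hr'.mul (hz.mul (hz.mul (hv.mul hF)))
    refine energy h e R v (fun p => zet R p * zet R p) hv (hz.mul hz) ?_ ?_ ?_
      (fun k p => (if k = m then -2 else 0) *
        (rho e a (p.2 e) * (zet R p * (zet R p * (v p * F p)))))
      (fun k => contDiff_const.mul hprod) ?_ _ _ (by fun_prop) (by fun_prop) ?_
    · intro x _; exact mul_self_nonneg _
    · intro x _; simp [zet_top]
    · intro t _ x hx; simp [zet_lat R t hx]
    · intro k t _ x hx; simp [zet_lat R t hx]
    · intro p hp
      obtain ⟨z0, z1, z2, z3⟩ := zet_bd (h0.trans hr.le) hR hp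
      have e1 : ∑ k, pdx k (fun p : ℝ × (Fin d → ℝ) => (if k = m then (-2:ℝ) else 0) *
        (rho e a (p.2 e) * (zet R p * (zet R p * (v p * F p))))) p
          = -2 * (rho e a (p.2 e) * (zet R p ^2 * v p * pdx m F p
            + F p * (zet R p^2 * pdx m v p + 2 * zet R p * pdx m (zet R) p * v p))) := by
        have : ∀ k, pdx k (fun p : ℝ × (Fin d → ℝ) => (if k = m then (-2:ℝ) else 0) *
          (rho e a (p.2 e) * (zet R p * (zet R p * (v p * F p))))) p
          = if k = m then -2 * pdx m (fun p : ℝ × (Fin d → ℝ) =>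
          (rho e a (p.2 e) * (zet R p * (zet R p * (v p * F p))))) p else 0 := by
          intro k
          rw [pdx_mul k contDiff_const hprod]
          have : ∀ c : ℝ, pdx k (fun _ : ℝ × (Fin d → ℝ) => c) p = 0 := by
            intro c; unfold pdx; simp
          rw [this]
          split_ifs with hk
          · subst hk; ring
          · ring
        simp_rw [this]
        rw [Finset.sum_ite_eq' Finset.univ m]
        simp only [Finset.mem_univ, if_true]
        rw [pdx_mul m hr' (hz.mul (hz.mul (hv.mul hF))), coef_pdx e m hme (h.rho_sm e),
          pdx_mul m hz (hz.mul (hv.mul hF)), pdx_mul m hz (hv.mul hF), pdx_mul m hv hF]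
        ring
      have e2 : ∀ k, pdx k (fun p : ℝ × (Fin d → ℝ) => zet R p * zet R p) p
          = 2 * zet R p * pdx k (zet R) p := by
        intro k; rw [pdx_mul k hz hz]; ring
      have e3 : pdt (fun p : ℝ × (Fin d → ℝ) => zet R p * zet R p) p
          = 2 * zet R p * pdt (zet R) p := by
        rw [pdt_mul hz hz]; ring
      simp only [e2, e3]
      rw [e1, hL p hp]
      have hq := h.quad e (p.2 e) (fun j => pdx j v p)
      obtain ⟨r1, r2, r3, -⟩ := h.rho_bd e (p.2 e)
      have hPm : (pdx m v p)^2 ≤ ∑ j, (pdx j v p)^2 :=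
        Finset.single_le_sum (f := fun j => (pdx j v p)^2) (fun i _ => sq_nonneg _)
          (Finset.mem_univ m)
      have hcross : -( d * η * (zet R p)^2 * ∑ j, (pdx j v p)^2 + d * d * K1 * (v p)^2) ≤
          ∑ k, ∑ j, 2 * v p * (2 * zet R p * pdx k (zet R) p) * Bc e a k j (p.2 e) * pdx j v p := by
        have : -( d * η * (zet R p)^2 * ∑ j, (pdx j v p)^2 + d * d * K1 * (v p)^2) =
            ∑ k : Fin d, ∑ j : Fin d, -(η * (zet R p * pdx j v p)^2 + K1 * (v p)^2) := by
          simp only [Finset.sum_neg_distrib, Finset.sum_add_distrib, Finset.sum_const,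
            Finset.card_univ, Fintype.card_fin, nsmul_eq_mul, mul_pow, ← Finset.mul_sum]
          ring
        rw [this]
        refine Finset.sum_le_sum fun k _ => Finset.sum_le_sum fun j _ => ?_
        have hy := young η (zet R p * pdx j v p)
          (v p * (2 * pdx k (zet R) p * Bc e a k j (p.2 e))) hη0
        have hB := h.Bc_abs e k j (p.2 e)
        have hs : (2 * pdx k (zet R) p * Bc e a k j (p.2 e))^2 ≤ (2 * 256 * b)^2 := by
          apply sq_le_sq.2
          rw [abs_mul, abs_mul, abs_two, abs_of_nonneg (by positivity : 0 ≤ 2 * 256 * b)]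
          have := mul_le_mul (z3 k) hB (abs_nonneg _) (by norm_num)
          linarith
        have hs2 : η⁻¹ * (v p * (2 * pdx k (zet R) p * Bc e a k j (p.2 e)))^2 ≤ K1 * (v p)^2 := by
          have : (2 * pdx k (zet R) p * Bc e a k j (p.2 e))^2 * (v p)^2 ≤
            (2 * 256 * b)^2 * (v p)^2 := by gcongr
          calc _ = η⁻¹ * ((2 * pdx k (zet R) p * Bc e a k j (p.2 e))^2 * (v p)^2) := by ring
            _ ≤ η⁻¹ * ((2 * 256 * b)^2 * (v p)^2) := by gcongr
            _ = _ := by rw [hK1]; ring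
        have := (abs_le.1 hy).1
        linarith
      set ρ := rho e a (p.2 e)
      set Q := ∑ j, ∑ k, a (p.2 e) j k * (pdx j v p * pdx k v p)
      set P := ∑ j, (pdx j v p)^2 with hP
      set z := zet R p
      set S := ∑ k, ∑ j, 2 * v p * (2 * z * pdx k (zet R) p) * Bc e a k j (p.2 e) * pdx j v p
      have i1 : 2 * z^2 * (δ^2 * P) ≤ 2 * z^2 * (ρ * Q) := by gcongr
      have i2 : -(K3 * (v p)^2) ≤ ρ * (2 * z * pdt (zet R) p) * (v p)^2 := by
        have : |ρ * (2 * z * pdt (zet R) p)| ≤ K3 := by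
          rw [abs_mul, abs_mul, abs_mul, abs_two, abs_of_pos r3, abs_of_nonneg z0]
          have := mul_le_mul z1 z2 (abs_nonneg _) (by norm_num)
          have := mul_le_mul r2 this (by positivity) (by positivity)
          rw [hK3]; linarith
        have := (abs_le.1 this).1
        nlinarith [sq_nonneg (v p)]
      have i3 : -(η * z^2 * P + K2 * (F p)^2) ≤ -2 * ρ * F p * z^2 * pdx m v p := by
        have hy := young η (z * pdx m v p) (z * ρ * F p) hη0
        have hs : (z * ρ)^2 ≤ (256 * δ⁻¹)^2 := by
          have := mul_le_mul z1 r2 r3.le (by norm_num)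
          gcongr
        have hs2 : η⁻¹ * (z * ρ * F p)^2 ≤ K2 * (F p)^2 := by
          rw [mul_pow, hK2, mul_assoc]; gcongr
        have h3 : η * (z * pdx m v p)^2 ≤ η * z^2 * P := by
          rw [mul_pow, mul_assoc]; gcongr
        have := (abs_le.1 hy).2
        linarith
      have i4 : -(K3 * ((v p)^2 + (F p)^2)) ≤ -2 * ρ * F p * (2 * z * pdx m (zet R) p * v p) := by
        have hb : |ρ * z * pdx m (zet R) p| ≤ δ⁻¹ * 256 * 256 := by
          rw [abs_mul, abs_mul, abs_of_pos r3, abs_of_nonneg z0]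
          gcongr
          exact z3 m
        have hy : |2 * v p * F p| ≤ (v p)^2 + (F p)^2 := by
          have := young 1 (v p) (F p) one_pos; simpa using this
        have := mul_le_mul hb hy (abs_nonneg _) (by positivity)
        rw [← abs_mul] at this
        have h2 := (abs_le.1 this).2
        rw [hK3]; linarith
      have i5 : (d * η + η) * (z^2 * P) = δ^2 * (z^2 * P) := by
        rw [hη]; field_simp
      have n1 := mul_nonneg hK2' (sq_nonneg (v p))
      have n2 := mul_nonneg hK1' (sq_nonneg (F p))
      have n3 : 0 ≤ (d:ℝ) * d * (K1 * (F p)^2) := by positivity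
      have n4 := mul_nonneg hK3' (sq_nonneg (F p))
      have n5 := mul_nonneg hK3' (sq_nonneg (v p))
      rw [hC]
      linarith
  have hcut := cut (d := d) h0 hr (P := fun p => ∑ j, (pdx j v p)^2) (by fun_prop)
    (fun p => Finset.sum_nonneg (fun j _ => sq_nonneg _))
  refine hcut.trans ?_
  rw [integral_const_mul, integral_const_mul] at hmain
  rw [mul_assoc]
  have : 0 < R^2 - r^2 := by
    have : r^2 < R^2 := by gcongr
    linarith
  apply mul_le_mul_of_nonneg_left _ (by positivity)
  rw [mul_assoc, le_inv_mul_iff₀ (by positivity)]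
  exact hmain

set_option maxHeartbeats 1000000 in
lemma C2 (d : ℕ) (δ : ℝ) (r R : ℝ) (h0 : 0 ≤ r) (hr : r < R) (hR : R ≤ 4) :
    ∃ N : ℝ, 0 ≤ N ∧ ∀ (a : ℝ → Fin d → Fin d → ℝ), Ell d δ a → ∀ e : Fin d,
      ∀ v F : ℝ × (Fin d → ℝ) → ℝ, ContDiff ℝ (⊤ : ℕ∞) v → Continuous F →
      (∀ p ∈ Qc d R, Lop e a v p = F p) →
      ∫ p in Qc d r, (pdt v p)^2 ≤ N * ∫ p in Qc d R, ((pdx e v p)^2 +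
        (∑ k ∈ Finset.univ.erase e, ∑ j, (pdx j (pdx k v) p)^2) + (F p)^2) := by
  by_cases hδ : δ ∈ Set.Ioo (0:ℝ) 1
  swap
  · exact ⟨0, le_rfl, fun a h => absurd h.hδ hδ⟩
  have hd0 := hδ.1
  set η := δ / 8 with hη
  have hη0 : 0 < η := by positivity
  set K1 := η⁻¹ * (256)^2 * 4 + 2 * 256^2 with hK1
  set K2 := η⁻¹ * (256 * δ⁻¹)^2 with hK2
  set K3 := η⁻¹ * (256 * δ⁻¹ * (d * d * δ⁻¹))^2 with hK3
  set C := K1 + K2 + K3 with hC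
  have hK1' : 0 ≤ K1 := by positivity
  have hK2' : 0 ≤ K2 := by positivity
  have hK3' : 0 ≤ K3 := by positivity
  refine ⟨((R^2 - r^2)^4)⁻¹ * (δ⁻¹ * C), by positivity, ?_⟩
  intro a h e v F hv hF hL
  have hvj := fun j => pdx_smooth j hv
  have hvt := pdt_smooth hv
  have hvc := fun j => (hvj j).continuous
  have hvtc := hvt.continuous
  have hvjk := fun j k => (pdx_smooth j (hvj k)).continuous
  have hz := zet_sm (d := d) R
  have hzc := hz.continuous
  have hve := hvj e
  have hvec := hvc e
  have hSc : Continuous (fun p => ∑ k ∈ Finset.univ.erase e, ∑ j, (pdx j (pdx k v) p)^2) :=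
    continuous_finsetSum _ fun k _ => continuous_finsetSum _ fun j _ => (hvjk j k).pow 2
  have hmain : ∫ p in Qc d R, δ * ((zet R p)^2 * (pdt v p)^2) ≤
      ∫ p in Qc d R, C * ((pdx e v p)^2 +
        (∑ k ∈ Finset.univ.erase e, ∑ j, (pdx j (pdx k v) p)^2) + (F p)^2) := by
    have hprod : ContDiff ℝ (⊤ : ℕ∞) (fun p : ℝ × (Fin d → ℝ) =>
      zet R p * (zet R p * (pdt v p * pdx e v p))) := hz.mul (hz.mul (hvt.mul hve))
    refine div_lemma R (fun p => zet R p * (zet R p * (pdx e v p * pdx e v p)))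
      (fun k p => (if k = e then -2 else 0) * (zet R p * (zet R p * (pdt v p * pdx e v p))))
      (hz.mul (hz.mul (hve.mul hve))) (fun k => contDiff_const.mul hprod)
      ?_ ?_ ?_ _ _ (by fun_prop) (continuous_const.mul ((by fun_prop : Continuous fun p => (pdx e v p)^2).add hSc |>.add (by fun_prop))) ?_
    · intro x _; simp [zet_top]
    · intro x _; simp only [← mul_assoc]
      have h1 := mul_self_nonneg (zet R (0,x) * pdx e v (0,x))
      linarith
    · intro k t _ x hx; simp [zet_lat R t hx]
    · intro p hp
      obtain ⟨z0, z1, z2, z3⟩ := zet_bd (h0.trans hr.le) hR hp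
      have e1 : ∑ k, pdx k (fun p : ℝ × (Fin d → ℝ) => (if k = e then (-2:ℝ) else 0) *
        (zet R p * (zet R p * (pdt v p * pdx e v p)))) p
          = -2 * (zet R p ^2 * (pdt v p * pdx e (pdx e v) p + pdx e v p * pdx e (pdt v) p)
            + 2 * zet R p * pdx e (zet R) p * (pdt v p * pdx e v p)) := by
        have : ∀ k, pdx k (fun p : ℝ × (Fin d → ℝ) => (if k = e then (-2:ℝ) else 0) *
          (zet R p * (zet R p * (pdt v p * pdx e v p)))) p
          = if k = e then -2 * pdx e (fun p : ℝ × (Fin d → ℝ) =>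
          (zet R p * (zet R p * (pdt v p * pdx e v p)))) p else 0 := by
          intro k
          rw [pdx_mul k contDiff_const hprod]
          have : ∀ c : ℝ, pdx k (fun _ : ℝ × (Fin d → ℝ) => c) p = 0 := by
            intro c; unfold pdx; simp
          rw [this]
          split_ifs with hk
          · subst hk; ring
          · ring
        simp_rw [this]
        rw [Finset.sum_ite_eq' Finset.univ e]
        simp only [Finset.mem_univ, if_true]
        rw [pdx_mul e hz (hz.mul (hvt.mul hve)), pdx_mul e hz (hvt.mul hve), pdx_mul e hvt hve]
        ring
      have e2 : pdt (fun p => zet R p * (zet R p * (pdx e v p * pdx e v p))) p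
          = 2 * zet R p * pdt (zet R) p * (pdx e v p)^2
            + 2 * zet R p ^2 * pdx e v p * pdx e (pdt v) p := by
        rw [pdt_mul hz (hz.mul (hve.mul hve)), pdt_mul hz (hve.mul hve), pdt_mul hve hve,
          ← pdx_pdt hv e]
        ring
      rw [e1, e2]
      obtain ⟨r1, r2, r3, r4⟩ := h.rho_bd e (p.2 e)
      -- remainder
      set T := ∑ k ∈ Finset.univ.erase e, ∑ j, (pdx j (pdx k v) p)^2 with hT
      have hT0 : 0 ≤ T := Finset.sum_nonneg fun k _ => Finset.sum_nonneg fun j _ => sq_nonneg _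
      have hTjk : ∀ j k, k ≠ e → (pdx j (pdx k v) p)^2 ≤ T := by
        intro j k hk
        refine le_trans ?_ (Finset.single_le_sum (f := fun k => ∑ j, (pdx j (pdx k v) p)^2)
          (fun k _ => Finset.sum_nonneg fun j _ => sq_nonneg _)
          (Finset.mem_erase.2 ⟨hk, Finset.mem_univ k⟩))
        exact Finset.single_le_sum (f := fun j => (pdx j (pdx k v) p)^2)
          (fun j _ => sq_nonneg _) (Finset.mem_univ j)
      have hTjk' : ∀ j k, ¬ (j = e ∧ k = e) → |pdx j (pdx k v) p| ≤ Real.sqrt T := by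
        intro j k hjk
        rw [← Real.sqrt_sq_eq_abs]
        apply Real.sqrt_le_sqrt
        by_cases hk : k = e
        · have hj : j ≠ e := fun hj => hjk ⟨hj, hk⟩
          rw [pdx_pdx hv j k]; exact hTjk k j hj
        · exact hTjk j k hk
      set X := ∑ j, ∑ k, (if j = e ∧ k = e then 0 else a (p.2 e) j k * pdxx j k v p) with hX
      have hXabs : |X| ≤ d * d * (δ⁻¹ * Real.sqrt T) := by
        have : ∀ j k, |(if j = e ∧ k = e then 0 else a (p.2 e) j k * pdxx j k v p)|
            ≤ δ⁻¹ * Real.sqrt T := by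
          intro j k
          split_ifs with hjk
          · rw [abs_zero]; positivity
          · rw [abs_mul]; exact mul_le_mul (h.abs_le _ j k) (hTjk' j k hjk) (abs_nonneg _)
              (by positivity)
        calc |X| ≤ ∑ j : Fin d, ∑ k : Fin d, δ⁻¹ * Real.sqrt T := by
              refine (Finset.abs_sum_le_sum_abs _ _).trans (Finset.sum_le_sum fun j _ => ?_)
              exact (Finset.abs_sum_le_sum_abs _ _).trans (Finset.sum_le_sum fun k _ => this j k)
          _ = _ := by simp; ring
      have hEq : rho e a (p.2 e) * pdt v p + pdx e (pdx e v) p + rho e a (p.2 e) * X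
          = rho e a (p.2 e) * F p := by
        rw [← hL p hp]
        unfold Lop
        have : ∑ j, ∑ k, a (p.2 e) j k * pdxx j k v p = a (p.2 e) e e * pdxx e e v p + X := by
          have h1 : ∑ j, ∑ k, (if j = e ∧ k = e then a (p.2 e) j k * pdxx j k v p else 0)
              = a (p.2 e) e e * pdxx e e v p := by
            rw [Finset.sum_eq_single e, Finset.sum_eq_single e] <;> simp +contextual
          rw [← h1, hX, ← Finset.sum_add_distrib]
          refine Finset.sum_congr rfl fun j _ => ?_
          rw [← Finset.sum_add_distrib]
          refine Finset.sum_congr rfl fun k _ => ?_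
          split_ifs <;> ring
        rw [this, mul_add, mul_add, ← mul_assoc, r4]
        unfold pdxx
        ring
      have hvee : pdx e (pdx e v) p = rho e a (p.2 e) * F p - rho e a (p.2 e) * X
        - rho e a (p.2 e) * pdt v p := by linarith
      rw [hvee]
      set ρ := rho e a (p.2 e)
      set z := zet R p
      set vt := pdt v p
      set v1 := pdx e v p
      have i1 : δ * (z^2 * vt^2) ≤ ρ * (z^2 * vt^2) := by gcongr
      have y1 : -(η * (z*vt)^2 + K2 * (F p)^2) ≤ -(2 * (z * vt) * (z * ρ * F p)) := by
        have hy := young η (z * vt) (z * ρ * F p) hη0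
        have hs : (z * ρ)^2 ≤ (256 * δ⁻¹)^2 := by
          have := mul_le_mul z1 r2 r3.le (by norm_num)
          gcongr
        have hs2 : η⁻¹ * (z * ρ * F p)^2 ≤ K2 * (F p)^2 := by
          rw [mul_pow, hK2, mul_assoc]; gcongr
        have := (abs_le.1 hy).2
        linarith
      have y2 : -(η * (z*vt)^2 + K3 * T) ≤ 2 * (z * vt) * (z * ρ * X) := by
        have hy := young η (z * vt) (z * ρ * X) hη0
        have hs : |z * ρ * X| ≤ 256 * δ⁻¹ * (d * d * δ⁻¹) * Real.sqrt T := by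
          rw [abs_mul, abs_mul, abs_of_pos r3, abs_of_nonneg z0]
          calc z * ρ * |X| ≤ 256 * δ⁻¹ * (d * d * (δ⁻¹ * Real.sqrt T)) := by gcongr
            _ = _ := by ring
        have hs2 : (z * ρ * X)^2 ≤ (256 * δ⁻¹ * (d * d * δ⁻¹))^2 * T := by
          have : (256 * δ⁻¹ * (d * d * δ⁻¹))^2 * T
              = (256 * δ⁻¹ * (d * d * δ⁻¹) * Real.sqrt T)^2 := by
            rw [mul_pow _ (Real.sqrt T), Real.sq_sqrt hT0]
          rw [this, ← sq_abs (z * ρ * X)]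
          gcongr
        have hs3 : η⁻¹ * (z * ρ * X)^2 ≤ K3 * T := by
          rw [hK3, mul_assoc η⁻¹]
          exact mul_le_mul_of_nonneg_left hs2 (by positivity)
        have := (abs_le.1 hy).1
        linarith
      have y3 : -(η * (z*vt)^2 + η⁻¹ * (256)^2 * 4 * v1^2) ≤
          -(2 * (z * vt) * (2 * pdx e (zet R) p * v1)) := by
        have hy := young η (z * vt) (2 * pdx e (zet R) p * v1) hη0
        have hs : (pdx e (zet R) p)^2 ≤ 256^2 := by
          rw [← sq_abs]; have := z3 e; gcongr
        have hs2 : (pdx e (zet R) p)^2 * v1^2 ≤ 256^2 * v1^2 := by gcongr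
        have hs3 : η⁻¹ * ((pdx e (zet R) p)^2 * v1^2) ≤ η⁻¹ * (256^2 * v1^2) := by gcongr
        have := (abs_le.1 hy).2
        have h9 : η⁻¹ * (2 * pdx e (zet R) p * v1)^2
          = 4 * (η⁻¹ * ((pdx e (zet R) p)^2 * v1^2)) := by ring
        linarith
      have y4 : -(2 * 256^2 * v1^2) ≤ 2 * z * pdt (zet R) p * v1^2 := by
        have : |z * pdt (zet R) p| ≤ 256 * 256 := by
          rw [abs_mul, abs_of_nonneg z0]; gcongr
        have := mul_le_mul_of_nonneg_right (abs_le.1 this).1 (sq_nonneg v1)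
        linarith
      have n1 := mul_nonneg hK1' (sq_nonneg (F p))
      have n2 := mul_nonneg hK1' hT0
      have n3 := mul_nonneg hK2' (sq_nonneg v1)
      have n4 := mul_nonneg hK2' hT0
      have n5 := mul_nonneg hK3' (sq_nonneg v1)
      have n6 := mul_nonneg hK3' (sq_nonneg (F p))
      have n7 : K1 * v1^2 = η⁻¹ * (256)^2 * 4 * v1^2 + 2 * 256^2 * v1^2 := by rw [hK1]; ring
      have n8 : η * (z*vt)^2 = δ * (z^2*vt^2) / 8 := by rw [hη]; ring
      have n9 : 0 ≤ δ * (z^2 * vt^2) := by positivity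
      rw [hC]
      linarith
  have hcut := cut (d := d) h0 hr (P := fun p => (pdt v p)^2) (by fun_prop)
    (fun p => sq_nonneg _)
  refine hcut.trans ?_
  rw [integral_const_mul, integral_const_mul] at hmain
  rw [mul_assoc]
  have : 0 < R^2 - r^2 := by
    have : r^2 < R^2 := by gcongr
    linarith
  apply mul_le_mul_of_nonneg_left _ (by positivity)
  rw [mul_assoc, le_inv_mul_iff₀ (by positivity)]
  exact hmain

end cac


section words
variable {d : ℕ} {δ : ℝ} {a : ℝ → Fin d → Fin d → ℝ}

lemma Lop_sm (h : Ell d δ a) (e : Fin d) {v : ℝ × (Fin d → ℝ) → ℝ}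
    (hv : ContDiff ℝ (⊤ : ℕ∞) v) : ContDiff ℝ (⊤ : ℕ∞) (Lop e a v) := by
  unfold Lop
  exact (pdt_smooth hv).add (ContDiff.sum fun j _ => ContDiff.sum fun k _ =>
    (coef_smooth e (h.sm j k)).mul (pdx_smooth j (pdx_smooth k hv)))

lemma Lop_pdt (h : Ell d δ a) (e : Fin d) {v : ℝ × (Fin d → ℝ) → ℝ}
    (hv : ContDiff ℝ (⊤ : ℕ∞) v) (p) : Lop e a (pdt v) p = pdt (Lop e a v) p := by
  have h1 := fun j k => coef_smooth e (h.sm j k)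
  have h2 := fun j k => pdx_smooth j (pdx_smooth k hv)
  unfold Lop
  simp only [pdxx]
  rw [pdt_add (pdt_smooth hv) (ContDiff.sum (s := Finset.univ) fun j _ => ContDiff.sum (s := Finset.univ) fun k _ =>
    (h1 j k).mul (h2 j k)), pdt_sum _ (fun j => ContDiff.sum (s := Finset.univ) fun k _ => (h1 j k).mul (h2 j k))]
  congr 1
  refine Finset.sum_congr rfl fun j _ => ?_
  rw [pdt_sum _ (fun k => (h1 j k).mul (h2 j k))]
  refine Finset.sum_congr rfl fun k _ => ?_
  rw [pdt_mul (h1 j k) (h2 j k), coef_pdt e (h.sm j k)]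
  rw [pdx_pdt hv k, pdx_pdt (pdx_smooth k hv) j]; ring

lemma Lop_pdx (h : Ell d δ a) (e m : Fin d) (hm : m ≠ e) {v : ℝ × (Fin d → ℝ) → ℝ}
    (hv : ContDiff ℝ (⊤ : ℕ∞) v) (p) : Lop e a (pdx m v) p = pdx m (Lop e a v) p := by
  have h1 := fun j k => coef_smooth e (h.sm j k)
  have h2 := fun j k => pdx_smooth j (pdx_smooth k hv)
  unfold Lop
  simp only [pdxx]
  rw [pdx_add m (pdt_smooth hv) (ContDiff.sum (s := Finset.univ) fun j _ => ContDiff.sum (s := Finset.univ) fun k _ =>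
    (h1 j k).mul (h2 j k)), pdx_sum _ m (fun j => ContDiff.sum (s := Finset.univ) fun k _ => (h1 j k).mul (h2 j k)),
    pdx_pdt hv]
  congr 1
  refine Finset.sum_congr rfl fun j _ => ?_
  rw [pdx_sum _ m (fun k => (h1 j k).mul (h2 j k))]
  refine Finset.sum_congr rfl fun k _ => ?_
  rw [pdx_mul m (h1 j k) (h2 j k), coef_pdx e m hm (h.sm j k)]
  rw [pdx_pdx hv k m, pdx_pdx (pdx_smooth k hv) j m]; ring

def Sol (e : Fin d) (a : ℝ → Fin d → Fin d → ℝ) (v : ℝ × (Fin d → ℝ) → ℝ) : Prop :=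
  ContDiff ℝ (⊤ : ℕ∞) v ∧ ∀ p ∈ Qc d 4, Lop e a v p = 0

lemma fd_zero {g : ℝ × (Fin d → ℝ) → ℝ} (hg : ∀ p ∈ Qc d 4, g p = 0) (p) (hp : p ∈ Qc d 4) (ξ) :
    fderiv ℝ g p ξ = 0 := by
  have : g =ᶠ[nhds p] fun _ => 0 := by
    filter_upwards [(Qc_open 4).mem_nhds hp] with q hq using hg q hq
  rw [this.fderiv_eq]; simp

lemma Sol.pdt (h : Ell d δ a) {e : Fin d} {v : ℝ × (Fin d → ℝ) → ℝ} (hv : Sol e a v) :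
    Sol e a (pdt v) :=
  ⟨pdt_smooth hv.1, fun p hp => by rw [Lop_pdt h e hv.1]; exact fd_zero hv.2 p hp _⟩

lemma Sol.pdx (h : Ell d δ a) {e m : Fin d} (hm : m ≠ e) {v : ℝ × (Fin d → ℝ) → ℝ}
    (hv : Sol e a v) : Sol e a (pdx m v) :=
  ⟨pdx_smooth m hv.1, fun p hp => by rw [Lop_pdx h e m hm hv.1]; exact fd_zero hv.2 p hp _⟩

/-- pure second derivative from the equation -/
lemma eq_ee (h : Ell d δ a) (e : Fin d) {v : ℝ × (Fin d → ℝ) → ℝ}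
    (hv : ContDiff ℝ (⊤ : ℕ∞) v) (p) (hL : Lop e a v p = 0) :
    |pdx e (pdx e v) p| ≤ δ⁻¹ * |pdt v p| +
      2 * δ⁻¹ * δ⁻¹ * ∑ k ∈ Finset.univ.erase e, ∑ j, |pdx j (pdx k v) p| := by
  have hd0 := h.hδ.1
  have hB := h.Bc_sum e (p.2 e) (fun k j => pdxx k j v p) (fun j k => congrFun (pdx_pdx hv j k) p)
  obtain ⟨r1, r2, r3, r4⟩ := h.rho_bd e (p.2 e)
  rw [← Finset.add_sum_erase _ _ (Finset.mem_univ e)] at hB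
  have h1 : ∑ j, Bc e a e j (p.2 e) * pdxx e j v p = pdx e (pdx e v) p := by
    rw [Finset.sum_eq_single e] <;> simp +contextual [Bc, pdxx]
  rw [h1] at hB
  have h2 : pdx e (pdx e v) p = - (rho e a (p.2 e) * pdt v p) -
      ∑ k ∈ Finset.univ.erase e, ∑ j, Bc e a k j (p.2 e) * pdxx k j v p := by
    unfold Lop at hL
    have : ∑ j, ∑ k, a (p.2 e) j k * pdxx j k v p = - pdt v p := by linarith
    rw [this] at hB
    linarith
  have h3 : |rho e a (p.2 e) * pdt v p| ≤ δ⁻¹ * |pdt v p| := by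
    rw [abs_mul, abs_of_pos r3]; gcongr
  have h4 : |∑ k ∈ Finset.univ.erase e, ∑ j, Bc e a k j (p.2 e) * pdxx k j v p| ≤
      2 * δ⁻¹ * δ⁻¹ * ∑ k ∈ Finset.univ.erase e, ∑ j, |pdx j (pdx k v) p| := by
    rw [Finset.mul_sum]
    refine (Finset.abs_sum_le_sum_abs _ _).trans (Finset.sum_le_sum fun k _ => ?_)
    rw [Finset.mul_sum]
    refine (Finset.abs_sum_le_sum_abs _ _).trans (Finset.sum_le_sum fun j _ => ?_)
    rw [abs_mul, pdx_pdx hv j k]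
    exact mul_le_mul_of_nonneg_right (h.Bc_abs e k j _) (abs_nonneg _)
  rw [h2]
  refine (abs_sub _ _).trans ?_
  rw [abs_neg]
  linarith

abbrev Fn (d : ℕ) := ℝ × (Fin d → ℝ) → ℝ

/-- density functionals controlled by the L2 norm of the solution -/
def BF (δ : ℝ) (e : Fin d) (Φ : Fn d → Fn d) : Prop :=
  (∀ v, ContDiff ℝ (⊤ : ℕ∞) v → Continuous (Φ v)) ∧
  ∀ r R : ℝ, 0 ≤ r → r < R → R ≤ 4 → ∃ N : ℝ, 0 ≤ N ∧
    ∀ a : ℝ → Fin d → Fin d → ℝ, Ell d δ a → ∀ v, Sol e a v →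
      ∫ p in Qc d r, Φ v p ≤ N * ∫ p in Qc d R, (v p)^2

lemma intsq_nonneg (R : ℝ) (v : Fn d) : 0 ≤ ∫ p in Qc d R, (v p)^2 :=
  integral_nonneg fun _ => sq_nonneg _

lemma BF.add {e : Fin d} {Φ Ψ : Fn d → Fn d} (h1 : BF δ e Φ) (h2 : BF δ e Ψ) :
    BF δ e (fun v p => Φ v p + Ψ v p) := by
  refine ⟨fun v hv => (h1.1 v hv).add (h2.1 v hv), fun r R h0 hr hR => ?_⟩
  obtain ⟨N1, n1, b1⟩ := h1.2 r R h0 hr hR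
  obtain ⟨N2, n2, b2⟩ := h2.2 r R h0 hr hR
  refine ⟨N1 + N2, by positivity, fun a ha v hv => ?_⟩
  rw [integral_add (intQ (h1.1 v hv.1) r) (intQ (h2.1 v hv.1) r), add_mul]
  exact add_le_add (b1 a ha v hv) (b2 a ha v hv)

lemma BF.sum {ι : Type*} [DecidableEq ι] (s : Finset ι) {e : Fin d} {Φ : ι → Fn d → Fn d}
    (h : ∀ i ∈ s, BF δ e (Φ i)) : BF δ e (fun v p => ∑ i ∈ s, Φ i v p) := by
  induction s using Finset.induction_on with
  | empty => 
    refine ⟨fun v _ => by simpa using continuous_const, fun r R _ _ _ => ⟨0, le_rfl, ?_⟩⟩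
    intro a ha v hv; simp
  | insert i s hi ih =>
    simp only [Finset.sum_insert hi]
    exact (h i (Finset.mem_insert_self i s)).add
      (ih fun j hj => h j (Finset.mem_insert_of_mem hj))

lemma BF.comp {e : Fin d} {Φ : Fn d → Fn d} (h1 : BF δ e Φ) {S : Fn d → Fn d}
    (hS : ∀ v, ContDiff ℝ (⊤ : ℕ∞) v → ContDiff ℝ (⊤ : ℕ∞) (S v))
    (hSol : ∀ a, Ell d δ a → ∀ v, Sol e a v → Sol e a (S v))
    (h2 : BF δ e (fun v p => (S v p)^2)) : BF δ e (fun v => Φ (S v)) := by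
  refine ⟨fun v hv => h1.1 _ (hS v hv), fun r R h0 hr hR => ?_⟩
  obtain ⟨N1, n1, b1⟩ := h1.2 r ((r+R)/2) h0 (by linarith) (by linarith)
  obtain ⟨N2, n2, b2⟩ := h2.2 ((r+R)/2) R (by linarith) (by linarith) hR
  refine ⟨N1 * N2, by positivity, fun a ha v hv => ?_⟩
  refine (b1 a ha _ (hSol a ha v hv)).trans ?_
  rw [mul_assoc]
  exact mul_le_mul_of_nonneg_left (b2 a ha v hv) n1

lemma BF.mono {e : Fin d} {Φ Ψ : Fn d → Fn d} (h1 : BF δ e Ψ)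
    (hc : ∀ v, ContDiff ℝ (⊤ : ℕ∞) v → Continuous (Φ v)) (C : ℝ) (hC : 0 ≤ C)
    (hle : ∀ a, Ell d δ a → ∀ v, Sol e a v → ∀ p ∈ Qc d 4, Φ v p ≤ C * Ψ v p) : BF δ e Φ := by
  refine ⟨hc, fun r R h0 hr hR => ?_⟩
  obtain ⟨N1, n1, b1⟩ := h1.2 r R h0 hr hR
  refine ⟨C * N1, by positivity, fun a ha v hv => ?_⟩
  rw [mul_assoc]
  refine le_trans ?_ (mul_le_mul_of_nonneg_left (b1 a ha v hv) hC)
  rw [← integral_const_mul]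
  refine setIntegral_mono_on (intQ (hc v hv.1) r) (intQ (continuous_const.mul (h1.1 v hv.1)) r)
    (Qc_open r).measurableSet fun p hp => hle a ha v hv p (Qc_mono h0 (by linarith) hp)

lemma BF_id (e : Fin d) : BF δ e (fun v p => (v p)^2) := by
  refine ⟨fun v hv => hv.continuous.pow 2, fun r R h0 hr hR => ⟨1, zero_le_one, ?_⟩⟩
  intro a ha v hv
  rw [one_mul]
  exact setIntegral_mono_set (intQ (hv.1.continuous.pow 2) R)
    (Filter.Eventually.of_forall fun p => sq_nonneg _) (Qc_mono h0 hr.le).eventuallyLE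

lemma BF_grad (e m : Fin d) (hm : m ≠ e) : BF δ e (fun v p => ∑ j, (pdx j v p)^2) := by
  refine ⟨fun v hv => continuous_finsetSum _ fun j _ => (pdx_smooth j hv).continuous.pow 2,
    fun r R h0 hr hR => ?_⟩
  obtain ⟨N, n, b⟩ := C1 d δ r R h0 hr hR
  refine ⟨N, n, fun a ha v hv => ?_⟩
  have := b a ha e m hm v (fun _ => 0) hv.1 contDiff_const (fun p hp => by
    rw [hv.2 p (Qc_mono (by linarith) hR hp)]; simp [pdx])
  simpa using this

lemma BF_pdx (e m : Fin d) (hm : m ≠ e) (j : Fin d) : BF δ e (fun v p => (pdx j v p)^2) := by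
  refine (BF_grad e m hm).mono (fun v hv => (pdx_smooth j hv).continuous.pow 2) 1 zero_le_one ?_
  intro a ha v hv p hp
  rw [one_mul]
  exact Finset.single_le_sum (f := fun j => (pdx j v p)^2) (fun j _ => sq_nonneg _)
    (Finset.mem_univ j)

lemma BF.pdx {e m : Fin d} (hm : m ≠ e) {Φ : Fn d → Fn d} (h1 : BF δ e Φ) :
    BF δ e (fun v => Φ (pdx m v)) :=
  h1.comp (fun _ hv => pdx_smooth m hv) (fun _ ha _ hv => hv.pdx ha hm) (BF_pdx e m hm m)

lemma BF_T (e m : Fin d) (hm : m ≠ e) :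
    BF δ e (fun v p => ∑ k ∈ Finset.univ.erase e, ∑ j, (pdx j (pdx k v) p)^2) :=
  BF.sum _ fun _ hk => (BF_grad e m hm).pdx (Finset.ne_of_mem_erase hk)

lemma BF_pdt (e m : Fin d) (hm : m ≠ e) : BF δ e (fun v p => (pdt v p)^2) := by
  have hΨ := (BF_pdx (δ := δ) e m hm e).add (BF_T e m hm)
  refine ⟨fun v hv => (pdt_smooth hv).continuous.pow 2, fun r R h0 hr hR => ?_⟩
  obtain ⟨N1, n1, b1⟩ := C2 d δ r ((r+R)/2) h0 (by linarith) (by linarith)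
  obtain ⟨N2, n2, b2⟩ := hΨ.2 ((r+R)/2) R (by linarith) (by linarith) hR
  refine ⟨N1 * N2, by positivity, fun a ha v hv => ?_⟩
  have h1 := b1 a ha e v (fun _ => 0) hv.1 continuous_const
    (fun p hp => hv.2 p (Qc_mono (by linarith) (by linarith) hp))
  rw [mul_assoc]
  refine h1.trans (mul_le_mul_of_nonneg_left ?_ n1)
  simpa using b2 a ha v hv

lemma BF.pdt {e m : Fin d} (hm : m ≠ e) {Φ : Fn d → Fn d} (h1 : BF δ e Φ) :
    BF δ e (fun v => Φ (pdt v)) :=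
  h1.comp (fun _ hv => pdt_smooth hv) (fun _ ha _ hv => hv.pdt ha) (BF_pdt e m hm)

lemma BF_ee (e m : Fin d) (hm : m ≠ e) (hδ : 0 < δ) : BF δ e (fun v p => (pdx e (pdx e v) p)^2) := by
  refine ((BF_pdt (δ := δ) e m hm).add (BF_T e m hm)).mono
    (fun v hv => (pdx_smooth e (pdx_smooth e hv)).continuous.pow 2)
    (2 * δ⁻¹^2 + 2 * (2 * δ⁻¹ * δ⁻¹)^2 * (d * d)) (by positivity) ?_
  intro a ha v hv p hp
  have h1 := eq_ee ha e hv.1 p (hv.2 p hp)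
  set T := ∑ k ∈ Finset.univ.erase e, ∑ j, |pdx j (pdx k v) p| with hT
  set T2 := ∑ k ∈ Finset.univ.erase e, ∑ j, (pdx j (pdx k v) p)^2 with hT2
  have hTT : T^2 ≤ d * d * T2 := by
    have a1 := sq_sum_le_card_mul_sum_sq (s := Finset.univ.erase e)
      (f := fun k => ∑ j, |pdx j (pdx k v) p|)
    have a2 : ∀ k, (∑ j, |pdx j (pdx k v) p|)^2 ≤ d * ∑ j, (pdx j (pdx k v) p)^2 := by
      intro k
      have := sq_sum_le_card_mul_sum_sq (s := Finset.univ)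
        (f := fun j => |pdx j (pdx k v) p|)
      simpa using this
    have a3 : ((Finset.univ.erase e).card : ℝ) ≤ d := by
      have := Finset.card_le_univ (Finset.univ.erase e)
      rw [Fintype.card_fin] at this
      exact_mod_cast this
    refine a1.trans ?_
    rw [mul_assoc]
    refine mul_le_mul a3 ?_ (Finset.sum_nonneg fun _ _ => sq_nonneg _) (by positivity)
    rw [hT2, Finset.mul_sum]
    exact Finset.sum_le_sum fun k _ => a2 k
  have hT20 : 0 ≤ T2 := Finset.sum_nonneg fun _ _ => Finset.sum_nonneg fun _ _ => sq_nonneg _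
  have hT0 : 0 ≤ T := Finset.sum_nonneg fun _ _ => Finset.sum_nonneg fun _ _ => abs_nonneg _
  calc (pdx e (pdx e v) p)^2 = |pdx e (pdx e v) p|^2 := (sq_abs _).symm
    _ ≤ (δ⁻¹ * |pdt v p| + 2 * δ⁻¹ * δ⁻¹ * T)^2 := by gcongr
    _ ≤ 2 * (δ⁻¹ * |pdt v p|)^2 + 2 * (2 * δ⁻¹ * δ⁻¹ * T)^2 := by
        nlinarith [sq_nonneg (δ⁻¹ * |pdt v p| - 2 * δ⁻¹ * δ⁻¹ * T)]
    _ = 2 * δ⁻¹^2 * (pdt v p)^2 + 2 * (2 * δ⁻¹ * δ⁻¹)^2 * T^2 := by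
        rw [mul_pow, mul_pow (2 * δ⁻¹ * δ⁻¹), sq_abs]; ring
    _ ≤ 2 * δ⁻¹^2 * (pdt v p)^2 + 2 * (2 * δ⁻¹ * δ⁻¹)^2 * (d * d * T2) := by gcongr
    _ ≤ _ := by
        have n1 : 0 ≤ δ⁻¹^2 * T2 := by positivity
        have n2 : 0 ≤ (2 * δ⁻¹ * δ⁻¹)^2 * (d * d) * (pdt v p)^2 := by positivity
        nlinarith

/-- iterated densities -/
noncomputable def W (e : Fin d) : ℕ → Fn d → Fn d
  | 0, g => fun p => (g p)^2 + (pdx e g p)^2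
  | n+1, g => fun p => (W e n g p + W e n (pdt g) p) + ∑ k ∈ Finset.univ.erase e, W e n (pdx k g) p

lemma W_cont (e : Fin d) (n : ℕ) : ∀ g : Fn d, ContDiff ℝ (⊤ : ℕ∞) g → Continuous (W e n g) := by
  induction n with
  | zero => exact fun g hg => (hg.continuous.pow 2).add ((pdx_smooth e hg).continuous.pow 2)
  | succ n ih =>
    exact fun g hg => ((ih g hg).add (ih _ (pdt_smooth hg))).add
      (continuous_finsetSum _ fun k _ => ih _ (pdx_smooth k hg))

lemma W_nonneg (e : Fin d) (n : ℕ) : ∀ (g : Fn d) (p), 0 ≤ W e n g p := by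
  induction n with
  | zero => intro g p; simp only [W]; positivity
  | succ n ih =>
    intro g p
    simp only [W]
    exact add_nonneg (add_nonneg (ih _ _) (ih _ _)) (Finset.sum_nonneg fun k _ => ih _ _)

lemma BF_W (e m : Fin d) (hm : m ≠ e) (n : ℕ) : BF δ e (W e n) := by
  induction n with
  | zero => exact (BF_id e).add (BF_pdx e m hm e)
  | succ n ih =>
    exact (ih.add (ih.pdt hm)).add (BF.sum _ fun k hk => ih.pdx (Finset.ne_of_mem_erase hk))

lemma BF_W' (e m : Fin d) (hm : m ≠ e) (hδ : 0 < δ) (n : ℕ) :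
    BF δ e (fun v => W e n (pdx e v)) := by
  induction n with
  | zero => exact (BF_pdx e m hm e).add (BF_ee e m hm hδ)
  | succ n ih =>
    refine BF.mono ((ih.add (ih.pdt hm)).add
      (BF.sum (Finset.univ.erase e) fun k hk => ih.pdx (Finset.ne_of_mem_erase hk)))
      (fun v hv => W_cont e _ _ (pdx_smooth e hv)) 1 zero_le_one ?_
    intro a ha v hv p hp
    rw [one_mul]
    simp only [W]
    rw [pdx_pdt hv.1 e]
    simp_rw [fun k => pdx_pdx hv.1 e k]
    exact le_rfl

end words


section sob
variable {d : ℕ}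

lemma one_d {φ φ' : ℝ → ℝ} (hφ : ∀ y, HasDerivAt φ (φ' y) y) (hc : Continuous φ') (c ε s : ℝ)
    (hε : 0 < ε) (hs : s ∈ Set.Icc c (c+ε)) :
    (φ s)^2 ≤ (1/ε + 1) * ∫ y in Set.Icc c (c+ε), ((φ y)^2 + (φ' y)^2) := by
  have hφc : Continuous φ := continuous_iff_continuousAt.2 fun y => (hφ y).continuousAt
  set I := ∫ y in Set.Icc c (c+ε), ((φ y)^2 + (φ' y)^2) with hI
  have hF : Continuous fun y => (φ y)^2 + (φ' y)^2 := (hφc.pow 2).add (hc.pow 2)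
  have hFi : IntegrableOn (fun y => (φ y)^2 + (φ' y)^2) (Set.Icc c (c+ε)) :=
    hF.continuousOn.integrableOn_Icc
  have key : ∀ y ∈ Set.Icc c (c+ε), (φ s)^2 ≤ (φ y)^2 + I := by
    intro y hy
    have h1 : ∫ z in y..s, 2 * φ z * φ' z = (φ s)^2 - (φ y)^2 := by
      refine intervalIntegral.integral_eq_sub_of_hasDerivAt (f := fun z => (φ z)^2) ?_ ?_
      · intro z _
        have := (hφ z).pow 2
        simp only [Nat.cast_ofNat, Nat.add_one_sub_one, pow_one] at this
        exact this
      · exact ((continuous_const.mul hφc).mul hc).intervalIntegrable _ _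
    have h2 : |∫ z in y..s, 2 * φ z * φ' z| ≤ I := by
      have := intervalIntegral.norm_integral_le_integral_norm_uIoc (f := fun z => 2 * φ z * φ' z)
        (a := y) (b := s) (μ := volume)
      rw [Real.norm_eq_abs] at this
      refine this.trans ?_
      have hsub : Set.uIoc y s ⊆ Set.Icc c (c+ε) := by
        intro z hz
        rw [Set.mem_uIoc] at hz
        rcases hz with hz | hz
        · exact ⟨hy.1.trans hz.1.le, hz.2.trans hs.2⟩
        · exact ⟨hs.1.trans hz.1.le, hz.2.trans hy.2⟩
      calc ∫ z in Set.uIoc y s, ‖2 * φ z * φ' z‖ ≤ ∫ z in Set.uIoc y s, ((φ z)^2 + (φ' z)^2) := by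
            refine setIntegral_mono_on ?_ (hFi.mono_set hsub) measurableSet_uIoc ?_
            · exact (((continuous_const.mul hφc).mul hc).norm.continuousOn.integrableOn_Icc
                (a := c) (b := c+ε)).mono_set hsub
            · intro z _
              rw [Real.norm_eq_abs, abs_le]
              constructor <;> nlinarith [sq_nonneg (φ z - φ' z), sq_nonneg (φ z + φ' z)]
        _ ≤ I := setIntegral_mono_set hFi
            (Filter.Eventually.of_forall fun z => by positivity) hsub.eventuallyLE
    have h3 := le_abs_self (∫ z in y..s, 2 * φ z * φ' z)
    linarith
  have hsqi : IntegrableOn (fun y => (φ y)^2) (Set.Icc c (c+ε)) :=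
    (hφc.pow 2).continuousOn.integrableOn_Icc
  have h4 : ∫ _y in Set.Icc c (c+ε), (φ s)^2 ≤ ∫ y in Set.Icc c (c+ε), ((φ y)^2 + I) :=
    setIntegral_mono_on (by simp) (hsqi.add (by simp)) measurableSet_Icc key
  have h5 : ∫ y in Set.Icc c (c+ε), (φ y)^2 ≤ I :=
    setIntegral_mono_on hsqi hFi measurableSet_Icc fun y _ => by nlinarith [sq_nonneg (φ' y)]
  rw [integral_add hsqi (by simp)] at h4
  simp [hε.le] at h4
  have : (φ s)^2 = (1/ε) * (ε * (φ s)^2) := by field_simp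
  rw [this]
  have h6 : (1/ε + 1) * I = (1/ε) * (I + ε * I) := by field_simp
  rw [h6]
  exact mul_le_mul_of_nonneg_left (by linarith) (by positivity)

lemma one_dL {φ φ' : ℝ → ℝ} (hφ : ∀ y, HasDerivAt φ (φ' y) y) (hc : Continuous φ') (c ε s : ℝ)
    (hε : 0 < ε) (hs : s ∈ Set.Icc c (c+ε)) :
    ENNReal.ofReal ((φ s)^2) ≤ ENNReal.ofReal (1/ε + 1) *
      ∫⁻ y in Set.Icc c (c+ε), (ENNReal.ofReal ((φ y)^2) + ENNReal.ofReal ((φ' y)^2)) := by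
  have h1 := one_d hφ hc c ε s hε hs
  have hφc : Continuous φ := continuous_iff_continuousAt.2 fun y => (hφ y).continuousAt
  have hF : Continuous fun y => (φ y)^2 + (φ' y)^2 := (hφc.pow 2).add (hc.pow 2)
  have h2 := ENNReal.ofReal_le_ofReal h1
  rw [ENNReal.ofReal_mul (by positivity), ofReal_integral_eq_lintegral_ofReal
    hF.continuousOn.integrableOn_Icc (Filter.Eventually.of_forall fun z => by positivity)] at h2
  refine h2.trans_eq ?_
  congr 2
  funext y
  exact ENNReal.ofReal_add (sq_nonneg _) (sq_nonneg _)

lemma dir_x {g : Fn d} (hg : ContDiff ℝ (⊤ : ℕ∞) g) (t : ℝ) (x : Fin d → ℝ) (i : Fin d) (y : ℝ) :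
    HasDerivAt (fun y => g (t, Function.update x i y)) (pdx i g (t, Function.update x i y)) y := by
  have h1 : HasDerivAt (fun y => (t, Function.update x i y)) ((0 : ℝ), (Pi.single i 1 : Fin d → ℝ)) y :=
    (hasDerivAt_const _ _).prodMk (hasDerivAt_update x i y)
  exact ((sm_diff hg) _).hasFDerivAt.comp_hasDerivAt y h1

lemma dir_t {g : Fn d} (hg : ContDiff ℝ (⊤ : ℕ∞) g) (x : Fin d → ℝ) (y : ℝ) :
    HasDerivAt (fun y => g (y, x)) (pdt g (y, x)) y := by
  have h1 : HasDerivAt (fun y : ℝ => (y, x)) ((1 : ℝ), (0 : Fin d → ℝ)) y :=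
    (hasDerivAt_id y).prodMk (hasDerivAt_const _ _)
  exact ((sm_diff hg) _).hasFDerivAt.comp_hasDerivAt y h1

lemma W_succ_le (e : Fin d) (n : ℕ) (g : Fn d) (i : Fin d) (hi : i ≠ e) (p) :
    W e n g p + W e n (pdx i g) p ≤ W e (n+1) g p := by
  simp only [W]
  have := Finset.single_le_sum (f := fun k => W e n (pdx k g) p) (s := Finset.univ.erase e)
    (fun k _ => W_nonneg e n _ p) (Finset.mem_erase.2 ⟨hi, Finset.mem_univ i⟩)
  have h2 := W_nonneg e n (pdt g) p
  linarith

lemma W_succ_le' (e : Fin d) (n : ℕ) (g : Fn d) (p) :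
    W e n g p + W e n (pdt g) p ≤ W e (n+1) g p := by
  simp only [W]
  have := Finset.sum_nonneg (s := Finset.univ.erase e) (f := fun k => W e n (pdx k g) p)
    fun k _ => W_nonneg e n _ p
  linarith

lemma box_ind (e : Fin d) (c : Fin d → ℝ) (ε : ℝ) (hε : 0 < ε) (t : ℝ) (s : Finset (Fin d)) :
    e ∉ s → ∀ g : Fn d, ContDiff ℝ (⊤ : ℕ∞) g → ∀ x : Fin d → ℝ,
      (∀ i, x i ∈ Set.Icc (c i) (c i + ε)) →
      ENNReal.ofReal ((g (t,x))^2) ≤ ENNReal.ofReal (1/ε+1) ^ (s.card + 1) *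
        lmarginal (fun i => (volume : Measure ℝ).restrict (Set.Icc (c i) (c i + ε))) (insert e s)
          (fun y => ENNReal.ofReal (W e s.card g (t,y))) x := by
  have hmeas : ∀ n (g : Fn d), ContDiff ℝ (⊤ : ℕ∞) g →
      Measurable fun y : Fin d → ℝ => ENNReal.ofReal (W e n g (t,y)) := fun n g hg =>
    ENNReal.measurable_ofReal.comp ((W_cont e n g hg).comp (by fun_prop)).measurable
  have hupd : ∀ (x : Fin d → ℝ), (∀ i, x i ∈ Set.Icc (c i) (c i + ε)) → ∀ i,
      ∀ y ∈ Set.Icc (c i) (c i + ε), ∀ j, Function.update x i y j ∈ Set.Icc (c j) (c j + ε) := by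
    intro x hx i y hy j
    by_cases hj : j = i
    · subst hj; simpa using hy
    · simpa [Function.update_of_ne hj] using hx j
  have hone : ∀ (i) (g : Fn d), ContDiff ℝ (⊤ : ℕ∞) g → ∀ x : Fin d → ℝ,
      (∀ i, x i ∈ Set.Icc (c i) (c i + ε)) →
      ENNReal.ofReal ((g (t,x))^2) ≤ ENNReal.ofReal (1/ε+1) * ∫⁻ y in Set.Icc (c i) (c i + ε),
        (ENNReal.ofReal ((g (t,Function.update x i y))^2) +
          ENNReal.ofReal ((pdx i g (t,Function.update x i y))^2)) := by
    intro i g hg x hx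
    have := one_dL (dir_x hg t x i) ((pdx_smooth i hg).continuous.comp (by fun_prop)) (c i) ε (x i)
      hε (hx i)
    simpa using this
  induction s using Finset.induction_on with
  | empty =>
    intro _ g hg x hx
    have := hone e g hg x hx
    simp only [Finset.card_empty, zero_add, pow_one, insert_empty_eq, lmarginal_singleton, W]
    refine this.trans_eq ?_
    congr 2
    funext y
    rw [ENNReal.ofReal_add (sq_nonneg _) (sq_nonneg _)]
  | insert i s hi ih =>
    intro he g hg x hx
    have hie : i ≠ e := fun h => he (h ▸ Finset.mem_insert_self i s)
    have hes : e ∉ s := fun h => he (Finset.mem_insert_of_mem h)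
    refine (hone i g hg x hx).trans ?_
    rw [Finset.card_insert_of_notMem hi, pow_succ', mul_assoc, Finset.insert_comm,
      lmarginal_insert _ (hmeas _ g hg) (by simp [hie, hi])]
    refine mul_le_mul_right ?_ _
    rw [← lintegral_const_mul']
    · refine setLIntegral_mono' measurableSet_Icc fun y hy => ?_
      have h1 := ih hes g hg _ (hupd x hx i y hy)
      have h2 := ih hes _ (pdx_smooth i hg) _ (hupd x hx i y hy)
      refine (add_le_add h1 h2).trans ?_
      rw [← mul_add]
      refine mul_le_mul_right ?_ _
      unfold lmarginal
      refine (lintegral_add_left ((hmeas s.card g hg).comp (measurable_updateFinset (s := insert e s) (x := Function.update x i y))) _).symm.le.trans ?_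
      refine lintegral_mono fun z => ?_
      simp only [Function.comp]
      rw [← ENNReal.ofReal_add (W_nonneg _ _ _ _) (W_nonneg _ _ _ _)]
      exact ENNReal.ofReal_le_ofReal (W_succ_le e _ g i hie _)
    · exact ENNReal.pow_ne_top ENNReal.ofReal_ne_top

lemma sob (e : Fin d) : ∃ C : ℝ, 0 ≤ C ∧ ∀ g : Fn d, ContDiff ℝ (⊤ : ℕ∞) g → ∀ p ∈ Qc d 1,
    (g p)^2 ≤ C * ∫ q in Qc d 2, W e d g q := by
  set ε : ℝ := 1/(d+1) with hε
  have hε0 : 0 < ε := by positivity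
  refine ⟨(1/ε+1)^(d+1), by positivity, ?_⟩
  rintro g hg ⟨t0, x0⟩ hp
  have hd : d = (Finset.univ.erase e).card + 1 := by
    rw [Finset.card_erase_of_mem (Finset.mem_univ e), Finset.card_univ, Fintype.card_fin]
    have := e.pos
    omega
  obtain ⟨n, hn⟩ : ∃ n, n = (Finset.univ.erase e).card := ⟨_, rfl⟩
  rw [← hn] at hd
  have hbox : ∀ (g : Fn d), ContDiff ℝ (⊤ : ℕ∞) g → ∀ t,
      ENNReal.ofReal ((g (t,x0))^2) ≤ ENNReal.ofReal (1/ε+1) ^ (n + 1) *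
        ∫⁻ y in Set.univ.pi fun i => Set.Icc (x0 i) (x0 i + ε), ENNReal.ofReal (W e n g (t,y)) := by
    intro g hg t
    have := box_ind e x0 ε hε0 t (Finset.univ.erase e) (by simp) g hg x0
      (fun i => ⟨le_rfl, by linarith⟩)
    rw [Finset.insert_erase (Finset.mem_univ e), lmarginal_univ, ← hn, 
      ← Measure.restrict_pi_pi] at this
    exact this
  have hWm : ∀ n (g : Fn d), ContDiff ℝ (⊤ : ℕ∞) g →
      Measurable fun q : ℝ × (Fin d → ℝ) => ENNReal.ofReal (W e n g q) := fun n g hg =>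
    ENNReal.measurable_ofReal.comp (W_cont e n g hg).measurable
  have hmain : ENNReal.ofReal ((g (t0,x0))^2) ≤ ENNReal.ofReal (1/ε+1) ^ (d + 1) *
      ∫⁻ q in Qc d 2, ENNReal.ofReal (W e d g q) := by
    have h1 := one_dL (dir_t hg x0) ((pdt_smooth hg).continuous.comp (by fun_prop)) t0 ε t0 hε0
      ⟨le_rfl, by linarith⟩
    refine h1.trans ?_
    rw [pow_succ', mul_assoc]
    refine mul_le_mul_right ?_ _
    have h2 : ∫⁻ y in Set.Icc t0 (t0+ε), (ENNReal.ofReal ((g (y,x0))^2) +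
        ENNReal.ofReal ((pdt g (y,x0))^2)) ≤ ENNReal.ofReal (1/ε+1) ^ d *
        ∫⁻ t in Set.Icc t0 (t0+ε), ∫⁻ y in Set.univ.pi fun i => Set.Icc (x0 i) (x0 i + ε),
          ENNReal.ofReal (W e d g (t,y)) := by
      rw [← lintegral_const_mul' _ _ (ENNReal.pow_ne_top ENNReal.ofReal_ne_top)]
      refine lintegral_mono fun t => ?_
      refine (add_le_add (hbox g hg t) (hbox _ (pdt_smooth hg) t)).trans ?_
      rw [← mul_add, ← hd]
      refine mul_le_mul_right ?_ _
      refine (lintegral_add_left ((hWm n g hg).comp (g := fun q => ENNReal.ofReal (W e n g q)) (f := fun y => (t, y)) (by fun_prop)) _).symm.le.trans ?_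
      refine lintegral_mono fun z => ?_
      simp only [Function.comp]
      rw [← ENNReal.ofReal_add (W_nonneg _ _ _ _) (W_nonneg _ _ _ _)]
      refine ENNReal.ofReal_le_ofReal ?_
      have := W_succ_le' e n g (t, z)
      rwa [← hd] at this
    refine h2.trans (mul_le_mul_right ?_ _)
    rw [← lintegral_prod (μ := volume.restrict (Set.Icc t0 (t0+ε)))
      (ν := volume.restrict (Set.univ.pi fun i => Set.Icc (x0 i) (x0 i + ε))) 
      (fun q => ENNReal.ofReal (W e d g q)) (hWm _ g hg).aemeasurable, Measure.prod_restrict]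
    refine lintegral_mono_set ?_
    rintro ⟨t, x⟩ ⟨ht, hx⟩
    obtain ⟨⟨p1, p2⟩, p3⟩ := hp
    simp only [ballE, Set.mem_setOf_eq] at p3
    have hd1 : (1:ℝ) ≤ d := by exact_mod_cast e.pos
    have hε1 : ε ≤ 1 := by rw [hε, div_le_one (by positivity)]; linarith
    simp only at p1 p2
    refine ⟨⟨lt_of_lt_of_le p1 ht.1, ?_⟩, ?_⟩
    · have := ht.2
      simp only at this ⊢
      norm_num at p2 ⊢
      linarith
    · simp only [ballE, Set.mem_setOf_eq]
      have hx' : ∀ i, (x i)^2 ≤ 2 * (x0 i)^2 + 2 * ε^2 := by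
        intro i
        have := hx i (Set.mem_univ i)
        have a1 := this.1
        have a2 := this.2
        simp only at a1 a2
        have a3 : (x i - x0 i)^2 ≤ ε^2 := by
          apply pow_le_pow_left₀ <;> linarith
        nlinarith [sq_nonneg (x i - 2 * x0 i)]
      have a4 := Finset.sum_le_sum (s := Finset.univ) fun i _ => hx' i
      rw [Finset.sum_add_distrib, ← Finset.mul_sum] at a4
      simp only [Finset.sum_const, Finset.card_univ, Fintype.card_fin, nsmul_eq_mul] at a4
      have a5 : d * (2 * ε^2) ≤ 2 := by
        rw [hε, div_pow, one_pow]
        field_simp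
        nlinarith
      linarith
  rw [← ofReal_integral_eq_lintegral_ofReal (intQ (W_cont e d g hg) 2)
    (Filter.Eventually.of_forall fun z => W_nonneg _ _ _ _), ← ENNReal.ofReal_pow (by positivity),
    ← ENNReal.ofReal_mul (by positivity)] at hmain
  exact (ENNReal.ofReal_le_ofReal_iff (mul_nonneg (by positivity)
    (integral_nonneg fun z => W_nonneg _ _ _ _))).1 hmain

end sob


section fin6
variable {d : ℕ} {δ : ℝ} {a : ℝ → Fin d → Fin d → ℝ}

lemma int_mono_Q {f g : Fn d} (hf : Continuous f) (hg : Continuous g) (R : ℝ)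
    (hle : ∀ p ∈ Qc d R, f p ≤ g p) : ∫ p in Qc d R, f p ≤ ∫ p in Qc d R, g p :=
  setIntegral_mono_on (intQ hf R) (intQ hg R) (Qc_open R).measurableSet hle

lemma int_mono_S {f : Fn d} (hf : Continuous f) (h0 : ∀ p, 0 ≤ f p) {r R : ℝ} (hr : 0 ≤ r)
    (h : r ≤ R) : ∫ p in Qc d r, f p ≤ ∫ p in Qc d R, f p :=
  setIntegral_mono_set (intQ hf R) (Filter.Eventually.of_forall h0) (Qc_mono hr h).eventuallyLE

lemma Lop_sub (e : Fin d) {v w : Fn d} (hv : ContDiff ℝ (⊤ : ℕ∞) v)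
    (hw : ContDiff ℝ (⊤ : ℕ∞) w) (p) :
    Lop e a (fun p => v p - w p) p = Lop e a v p - Lop e a w p := by
  unfold Lop
  rw [pdt_sub hv hw]
  have : ∀ j k, pdxx j k (fun p => v p - w p) p = pdxx j k v p - pdxx j k w p := by
    intro j k
    unfold pdxx
    rw [show pdx k (fun p => v p - w p) = fun p => pdx k v p - pdx k w p from
      funext fun p => pdx_sub k hv hw p, pdx_sub j (pdx_smooth k hv) (pdx_smooth k hw)]
  simp_rw [this, mul_sub, Finset.sum_sub_distrib]
  ring

noncomputable def DD (e : Fin d) (a : ℝ → Fin d → Fin d → ℝ) (u : Fn d) : ℝ :=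
  (∫ p in Qc d 4, (Lop e a u p)^2) + ∫ p in Qc d 4, ∑ j, ∑ k, (pdxx j k u p)^2

lemma ut_bound (h : Ell d δ a) (e : Fin d) (u : Fn d) (p) :
    (pdt u p)^2 ≤ 2 * (Lop e a u p)^2 + 2 * (δ⁻¹^2 * d^2) * ∑ j, ∑ k, (pdxx j k u p)^2 := by
  have hd0 := h.hδ.1
  have h1 : (∑ j, ∑ k, a (p.2 e) j k * pdxx j k u p)^2 ≤
      (δ⁻¹^2 * d^2) * ∑ j, ∑ k, (pdxx j k u p)^2 := by
    rw [← Finset.sum_product', ← Finset.sum_product']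
    have a1 := sq_sum_le_card_mul_sum_sq (s := (Finset.univ : Finset (Fin d)) ×ˢ Finset.univ)
      (f := fun x => a (p.2 e) x.1 x.2 * pdxx x.1 x.2 u p)
    refine a1.trans ?_
    rw [Finset.card_product, Finset.card_univ, Fintype.card_fin, Nat.cast_mul, mul_comm (δ⁻¹^2),
      ← sq, mul_assoc]
    refine mul_le_mul_of_nonneg_left ?_ (by positivity)
    rw [Finset.mul_sum]
    refine Finset.sum_le_sum fun x _ => ?_
    rw [mul_pow]
    refine mul_le_mul_of_nonneg_right ?_ (sq_nonneg _)
    rw [← sq_abs]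
    exact pow_le_pow_left₀ (abs_nonneg _) (h.abs_le _ _ _) 2
  have h2 : pdt u p = Lop e a u p - ∑ j, ∑ k, a (p.2 e) j k * pdxx j k u p := by
    unfold Lop; ring
  rw [h2]
  nlinarith [sq_nonneg (Lop e a u p + ∑ j, ∑ k, a (p.2 e) j k * pdxx j k u p)]

lemma csq {f : Fn d} (hf : ContDiff ℝ (⊤ : ℕ∞) f) : Continuous fun p => (f p)^2 :=
  hf.continuous.pow 2

lemma ccm (c : ℝ) {f : Fn d} (hf : Continuous f) : Continuous fun p => c * f p :=
  continuous_const.mul hf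

lemma cad {f g : Fn d} (hf : Continuous f) (hg : Continuous g) : Continuous fun p => f p + g p :=
  hf.add hg

lemma energy_h (d : ℕ) (δ : ℝ) (e : Fin d) : ∃ N : ℝ, 0 ≤ N ∧
    ∀ a : ℝ → Fin d → Fin d → ℝ, Ell d δ a → ∀ h u : Fn d, Sol e a h → ContDiff ℝ (⊤ : ℕ∞) u →
      (∀ p ∈ pbQc d 4, h p = u p) →
      (∫ p in Qc d 3, (pdt h p)^2 ≤ N * DD e a u) ∧
      ∀ l k, k ≠ e → ∫ p in Qc d 3, (pdx l (pdx k h) p)^2 ≤ N * DD e a u := by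
  by_cases hδ : δ ∈ Set.Ioo (0:ℝ) 1
  swap
  · exact ⟨0, le_rfl, fun a h => absurd h.hδ hδ⟩
  have hd0 := hδ.1
  obtain ⟨N1, n1, b1⟩ := C1 d δ (7/2) 4 (by norm_num) (by norm_num) (by norm_num)
  obtain ⟨N2, n2, b2⟩ := C2 d δ 3 (7/2) (by norm_num) (by norm_num) (by norm_num)
  obtain ⟨c, hc⟩ : ∃ c : ℝ, c = (2 * δ^2)⁻¹ * (2000 * δ⁻¹ ^ 3) := ⟨_, rfl⟩
  have hc0 : 0 ≤ c := by rw [hc]; positivity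
  have hcc : 0 ≤ δ⁻¹^2 * (d:ℝ)^2 := by positivity
  refine ⟨2 * (N1 * (c + 1)) + 2 * (N2 * (c + d * (N1 * (c+1)) + 1)) + 4 + 4 * (δ⁻¹^2 * d^2),
    by positivity, fun a ha h u hs hu hb => ?_⟩
  have hh := hs.1
  set A := ∫ p in Qc d 4, (Lop e a u p)^2 with hA
  set B := ∫ p in Qc d 4, ∑ j, ∑ k, (pdxx j k u p)^2 with hB
  have hLuc : Continuous fun p => (Lop e a u p)^2 := csq (Lop_sm ha e hu)
  have hBc : Continuous fun p => ∑ j, ∑ k, (pdxx j k u p)^2 :=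
    continuous_finsetSum _ fun j _ => continuous_finsetSum _ fun k _ =>
      csq (pdx_smooth j (pdx_smooth k hu))
  have hB0 : ∀ p, 0 ≤ ∑ j, ∑ k, (pdxx j k u p)^2 := fun p =>
    Finset.sum_nonneg fun _ _ => Finset.sum_nonneg fun _ _ => sq_nonneg _
  have A0 : 0 ≤ A := integral_nonneg fun _ => sq_nonneg _
  have B0 : 0 ≤ B := integral_nonneg hB0
  have hDD : DD e a u = A + B := rfl
  let w : Fn d := fun p => h p - u p
  have hw : ContDiff ℝ (⊤ : ℕ∞) w := hh.sub hu
  have hLw : ContDiff ℝ (⊤ : ℕ∞) (Lop e a w) := Lop_sm ha e hw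
  have hLwu : ∀ p ∈ Qc d 4, (Lop e a w p)^2 = (Lop e a u p)^2 := by
    intro p hp
    rw [Lop_sub e hh hu, hs.2 p hp]; ring
  have hAw : ∫ p in Qc d 4, (Lop e a w p)^2 = A :=
    setIntegral_congr_fun (Qc_open 4).measurableSet hLwu
  have e0 := C0 ha e w hw (fun p hp => by simp [w, hb p hp])
  rw [integral_const_mul, hAw] at e0
  -- gradient of w
  have e1 : ∀ k, ∫ p in Qc d 4, (pdx k w p)^2 ≤ c * A := by
    intro k
    rw [hc, mul_assoc]
    refine le_trans ?_ (mul_le_mul_of_nonneg_left e0 (by positivity))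
    rw [← integral_const_mul]
    refine int_mono_Q (csq (pdx_smooth k hw)) (ccm _
      (cad (ccm _ (csq hw)) (ccm _
        (continuous_finsetSum _ fun j _ => csq (pdx_smooth j hw))))) 4 fun p _ => ?_
    have s1 := Finset.single_le_sum (f := fun j => (pdx j w p)^2) (fun j _ => sq_nonneg _)
      (Finset.mem_univ k)
    have s2 : 0 ≤ (2 * δ^2)⁻¹ * (δ/4 * (w p)^2) := by positivity
    have s3 : (2 * δ^2)⁻¹ * (2 * δ^2 * ∑ j, (pdx j w p)^2) = ∑ j, (pdx j w p)^2 := by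
      field_simp
    rw [mul_add, s3]
    linarith
  have e2 : ∀ k, k ≠ e → ∫ p in Qc d (7/2), ∑ j, (pdx j (pdx k w) p)^2 ≤ N1 * (c+1) * A := by
    intro k hk
    have := b1 a ha e k hk (pdx k w) (Lop e a w) (pdx_smooth k hw) hLw
      (fun p _ => Lop_pdx ha e k hk hw p)
    rw [integral_add (intQ (csq (pdx_smooth k hw)) 4)
      (intQ (csq hLw) 4), hAw] at this
    refine this.trans ?_
    rw [mul_assoc]
    refine mul_le_mul_of_nonneg_left ?_ n1
    linarith [e1 k]
  have cj : ∀ k j, Continuous fun p => (pdx j (pdx k w) p)^2 := fun k j =>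
    csq (pdx_smooth j (pdx_smooth k hw))
  have cj' : ∀ k, Continuous fun p => ∑ j, (pdx j (pdx k w) p)^2 := fun k =>
    continuous_finsetSum _ fun j _ => cj k j
  have e3 : ∫ p in Qc d 3, (pdt w p)^2 ≤ N2 * (c + d * (N1 * (c+1)) + 1) * A := by
    have := b2 a ha e w (Lop e a w) hw hLw.continuous (fun p _ => rfl)
    refine this.trans ?_
    rw [mul_assoc]
    refine mul_le_mul_of_nonneg_left ?_ n2
    rw [integral_add (intQ (cad (csq (pdx_smooth e hw))
      (continuous_finsetSum _ fun k _ => cj' k)) _) (intQ (csq hLw) _),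
      integral_add (intQ (csq (pdx_smooth e hw)) _)
      (intQ (continuous_finsetSum _ fun k _ => cj' k) _),
      integral_finsetSum _ (fun k _ => intQ (cj' k) _)]
    have f1 := (int_mono_S (csq (pdx_smooth e hw)) (fun _ => sq_nonneg _)
      (r := 7/2) (R := 4) (by norm_num) (by norm_num)).trans (e1 e)
    have f2 := (int_mono_S (csq hLw) (fun _ => sq_nonneg _)
      (r := 7/2) (R := 4) (by norm_num) (by norm_num)).trans hAw.le
    have f3 : ∑ k ∈ Finset.univ.erase e, ∫ p in Qc d (7/2), ∑ j, (pdx j (pdx k w) p)^2 ≤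
        d * (N1 * (c+1) * A) := by
      refine (Finset.sum_le_card_nsmul _ _ _ fun k hk => e2 k (Finset.ne_of_mem_erase hk)).trans ?_
      rw [nsmul_eq_mul]
      refine mul_le_mul_of_nonneg_right ?_ (by positivity)
      have := Finset.card_le_univ (Finset.univ.erase e)
      rw [Fintype.card_fin] at this
      exact_mod_cast this
    nlinarith
  have hB3 : ∫ p in Qc d 3, ∑ j, ∑ k, (pdxx j k u p)^2 ≤ B :=
    int_mono_S hBc hB0 (by norm_num) (by norm_num)
  have hA3 : ∫ p in Qc d 3, (Lop e a u p)^2 ≤ A :=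
    int_mono_S hLuc (fun _ => sq_nonneg _) (by norm_num) (by norm_num)
  have x1 : 0 ≤ N1 * (c+1) * A := by positivity
  have x2 : 0 ≤ N2 * (c + d * (N1 * (c+1)) + 1) * A := by positivity
  have x3 : 0 ≤ N1 * (c+1) * B := by positivity
  have x4 : 0 ≤ N2 * (c + d * (N1 * (c+1)) + 1) * B := by positivity
  have x5 : 0 ≤ δ⁻¹^2 * d^2 * A := by positivity
  have x6 : 0 ≤ δ⁻¹^2 * d^2 * B := by positivity
  rw [hDD]
  constructor
  · have g1 : ∫ p in Qc d 3, (pdt h p)^2 ≤ ∫ p in Qc d 3, (2 * (pdt w p)^2 +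
        (4 * (Lop e a u p)^2 + 4 * (δ⁻¹^2 * d^2) * ∑ j, ∑ k, (pdxx j k u p)^2)) := by
      refine int_mono_Q (csq (pdt_smooth hh)) (cad (ccm _
        (csq (pdt_smooth hw))) (cad (ccm _ hLuc)
        (ccm _ hBc))) 3 fun p _ => ?_
      have := ut_bound ha e u p
      have s : pdt w p = pdt h p - pdt u p := pdt_sub hh hu p
      rw [s]
      nlinarith [sq_nonneg (pdt h p - 2 * pdt u p)]
    rw [integral_add (intQ (ccm _ (csq (pdt_smooth hw))) _)
      (intQ (cad (ccm _ hLuc) (ccm _ hBc)) _),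
      integral_add (intQ (ccm _ hLuc) _) (intQ (ccm _ hBc) _),
      integral_const_mul, integral_const_mul, integral_const_mul] at g1
    have g2 := mul_le_mul_of_nonneg_left hB3 (by positivity : 0 ≤ 4 * (δ⁻¹^2 * (d:ℝ)^2))
    nlinarith
  · intro l k hk
    have g1 : ∫ p in Qc d 3, (pdx l (pdx k h) p)^2 ≤ ∫ p in Qc d 3,
        (2 * ∑ j, (pdx j (pdx k w) p)^2 + 2 * ∑ j, ∑ k, (pdxx j k u p)^2) := by
      refine int_mono_Q (csq (pdx_smooth l (pdx_smooth k hh))) (cad (ccm _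
        (cj' k)) (ccm _ hBc)) 3 fun p _ => ?_
      have s : pdx l (pdx k w) p = pdx l (pdx k h) p - pdx l (pdx k u) p := by
        rw [show pdx k w = fun p => pdx k h p - pdx k u p from
          funext fun p => pdx_sub k hh hu p, pdx_sub l (pdx_smooth k hh) (pdx_smooth k hu)]
      have s1 := Finset.single_le_sum (f := fun j => (pdx j (pdx k w) p)^2)
        (fun j _ => sq_nonneg _) (Finset.mem_univ l)
      have s2 := Finset.single_le_sum (f := fun j => ∑ k, (pdxx j k u p)^2)
        (fun j _ => Finset.sum_nonneg fun _ _ => sq_nonneg _) (Finset.mem_univ l)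
      have s3 := Finset.single_le_sum (f := fun k => (pdxx l k u p)^2)
        (fun j _ => sq_nonneg _) (Finset.mem_univ k)
      simp only [s] at s1
      simp only [pdxx] at s2 s3 ⊢
      nlinarith [sq_nonneg (pdx l (pdx k h) p - 2 * pdx l (pdx k u) p)]
    rw [integral_add (intQ (ccm _ (cj' k)) _) (intQ (ccm _ hBc) _),
      integral_const_mul, integral_const_mul] at g1
    have g2 := (int_mono_S (cj' k) (fun _ => Finset.sum_nonneg fun _ _ => sq_nonneg _)
      (r := 3) (R := 7/2) (by norm_num) (by norm_num)).trans (e2 k hk)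
    linarith

/-- pointwise control -/
def PB (δ : ℝ) (e : Fin d) (S : Fn d → Fn d) : Prop :=
  ∃ N : ℝ, 0 ≤ N ∧ ∀ a : ℝ → Fin d → Fin d → ℝ, Ell d δ a → ∀ v, Sol e a v →
    ∀ p ∈ Qc d 1, (S v p)^2 ≤ N * ∫ q in Qc d 3, (v q)^2

lemma PB_of {e : Fin d} {S : Fn d → Fn d}
    (hS : ∀ v, ContDiff ℝ (⊤ : ℕ∞) v → ContDiff ℝ (⊤ : ℕ∞) (S v))
    (h : BF δ e (fun v => W e d (S v))) : PB δ e S := by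
  obtain ⟨C, c0, hC⟩ := sob e
  obtain ⟨N, n0, hN⟩ := h.2 2 3 (by norm_num) (by norm_num) (by norm_num)
  refine ⟨C * N, by positivity, fun a ha v hv p hp => ?_⟩
  refine (hC _ (hS v hv.1) p hp).trans ?_
  rw [mul_assoc]
  exact mul_le_mul_of_nonneg_left (hN a ha v hv) c0

lemma BW_pdx (e m : Fin d) (hm : m ≠ e) (hδ : 0 < δ) (j : Fin d) :
    BF δ e (fun v => W e d (pdx j v)) := by
  by_cases hj : j = e
  · subst hj; exact BF_W' j m hm hδ d
  · exact (BF_W e m hm d).pdx hj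

lemma PB.unif {e : Fin d} {ι : Type*} [Fintype ι] {S : ι → Fn d → Fn d} (h : ∀ i, PB δ e (S i)) :
    ∃ N : ℝ, 0 ≤ N ∧ ∀ i, ∀ a : ℝ → Fin d → Fin d → ℝ, Ell d δ a → ∀ v, Sol e a v →
    ∀ p ∈ Qc d 1, (S i v p)^2 ≤ N * ∫ q in Qc d 3, (v q)^2 := by
  choose N hN hb using h
  refine ⟨∑ i, N i, Finset.sum_nonneg fun i _ => hN i, fun i a ha v hv p hp => ?_⟩
  exact (hb i a ha v hv p hp).trans (mul_le_mul_of_nonneg_right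
    (Finset.single_le_sum (fun i _ => hN i) (Finset.mem_univ i)) (intsq_nonneg 3 v))

/-- All pointwise estimates. -/
lemma all_pt (d : ℕ) (δ : ℝ) (hδ : 0 < δ) (e m : Fin d) (hm : m ≠ e) : ∃ K : ℝ, 0 ≤ K ∧
    ∀ a : ℝ → Fin d → Fin d → ℝ, Ell d δ a → ∀ h u : Fn d, Sol e a h → ContDiff ℝ (⊤ : ℕ∞) u →
      (∀ p ∈ pbQc d 4, h p = u p) → ∀ p ∈ Qc d 1,
      |pdt (pdt h) p| ≤ K * √(DD e a u) ∧ (∀ j, |pdx j (pdt h) p| ≤ K * √(DD e a u)) ∧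
      (∀ j k, k ≠ e → |pdx j (pdx k (pdt h)) p| ≤ K * √(DD e a u)) ∧
      (∀ i j k, k ≠ e → |pdx i (pdx j (pdx k h)) p| ≤ K * √(DD e a u)) := by
  obtain ⟨N, n0, hN⟩ := energy_h d δ e
  obtain ⟨N1, n1, h1⟩ : PB δ e pdt := PB_of (fun v hv => pdt_smooth hv) ((BF_W e m hm d).pdt hm)
  obtain ⟨N2, n2, h2⟩ := PB.unif (fun j : Fin d => PB_of (δ := δ) (e := e) (S := pdx j)
    (fun v hv => pdx_smooth j hv) (BW_pdx e m hm hδ j))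
  obtain ⟨N3, n3, h3⟩ := PB.unif (fun x : Fin d × {k : Fin d // k ≠ e} =>
    PB_of (δ := δ) (e := e) (S := fun v => pdx x.1 (pdx x.2.1 v))
    (fun v hv => pdx_smooth _ (pdx_smooth _ hv)) ((BW_pdx e m hm hδ x.1).pdx x.2.2))
  obtain ⟨M, hM⟩ : ∃ M : ℝ, M = √((N1 + N2 + N3) * N) := ⟨_, rfl⟩
  have hM0 : 0 ≤ M := hM ▸ Real.sqrt_nonneg _
  refine ⟨M + δ⁻¹ * M + 2 * δ⁻¹ * δ⁻¹ * (d * (d * M)), by positivity, ?_⟩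
  intro a ha h u hs hu hb p hp
  obtain ⟨Et, Ex⟩ := hN a ha h u hs hu hb
  have hDD0 : 0 ≤ DD e a u := add_nonneg (integral_nonneg fun _ => sq_nonneg _)
    (integral_nonneg fun p => Finset.sum_nonneg fun _ _ => Finset.sum_nonneg fun _ _ => sq_nonneg _)
  have conv : ∀ (x I N' : ℝ), 0 ≤ N' → N' ≤ N1 + N2 + N3 → x^2 ≤ N' * I → I ≤ N * DD e a u →
      |x| ≤ M * √(DD e a u) := by
    intro x I N' hn' hn hx hI
    rw [hM, ← Real.sqrt_mul (by positivity)]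
    refine Real.abs_le_sqrt (hx.trans ?_)
    have := mul_le_mul_of_nonneg_left hI hn'
    have z : 0 ≤ N * DD e a u := by positivity
    nlinarith [mul_le_mul_of_nonneg_right hn z]
  have hst := hs.pdt ha
  have q1 := conv _ _ N1 n1 (by linarith) (h1 a ha _ hst p hp) Et
  have q2 := fun j => conv _ _ N2 n2 (by linarith) (h2 j a ha _ hst p hp) Et
  have q3 := fun j k hk => conv _ _ N3 n3 (by linarith) (h3 (j, ⟨k, hk⟩) a ha _ hst p hp) Et
  have q4 : ∀ i j k, k ≠ e → j ≠ e → |pdx i (pdx j (pdx k h)) p| ≤ M * √(DD e a u) :=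
    fun i j k hk hj => conv _ _ N2 n2 (by linarith)
      (h2 i a ha _ ((hs.pdx ha hk).pdx ha hj) p hp) (Ex j k hk)
  set X := √(DD e a u) with hX
  have hX0 : 0 ≤ X := Real.sqrt_nonneg _
  have y1 : 0 ≤ δ⁻¹ * M * X := by positivity
  have y2 : 0 ≤ 2 * δ⁻¹ * δ⁻¹ * (d * (d * M)) * X := by positivity
  have y3 : 0 ≤ M * X := by positivity
  refine ⟨by nlinarith, fun j => by nlinarith [q2 j], fun j k hk => by nlinarith [q3 j k hk], ?_⟩
  intro i j k hk
  by_cases hj : j = e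
  · by_cases hi : i = e
    · subst hi
      subst hj
      have hsk := hs.pdx ha hk
      have := eq_ee ha j hsk.1 p (hsk.2 p (Qc_mono (by norm_num) (by norm_num) hp))
      rw [← pdx_pdt hs.1 k] at this
      have t1 : ∑ k_1 ∈ Finset.univ.erase j, ∑ j_1, |pdx j_1 (pdx k_1 (pdx k h)) p| ≤
          d * (d * (M * X)) := by
        refine (Finset.sum_le_card_nsmul _ _ (d * (M * X)) fun l hl => ?_).trans ?_
        · refine (Finset.sum_le_card_nsmul _ _ (M * X) fun i _ =>
            q4 i l k hk (Finset.ne_of_mem_erase hl)).trans ?_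
          simp
        · rw [nsmul_eq_mul]
          refine mul_le_mul_of_nonneg_right ?_ (by positivity)
          have := Finset.card_le_univ (Finset.univ.erase j)
          rw [Fintype.card_fin] at this
          exact_mod_cast this
      have t2 := mul_le_mul_of_nonneg_left t1 (by positivity : 0 ≤ 2 * δ⁻¹ * δ⁻¹)
      have t3 := mul_le_mul_of_nonneg_left (q2 k) (by positivity : 0 ≤ δ⁻¹)
      nlinarith
    · rw [pdx_pdx (pdx_smooth k hs.1) i j]
      nlinarith [q4 j i k hk hi]
  · nlinarith [q4 i j k hk hj]

lemma pb_closure : pbQc d 4 ⊆ closure (Qc d 4) := by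
  unfold Qc
  rw [closure_prod_eq, closure_Ioo (by norm_num)]
  have hcl : ∀ x : Fin d → ℝ, ∑ j, (x j)^2 ≤ 4^2 → x ∈ closure (ballE d 4) := by
    intro x hx
    have hc : Continuous fun s : ℝ => s • x := by fun_prop
    have h1 : (1:ℝ) ∈ closure (Set.Ioo (0:ℝ) 1) := by
      rw [closure_Ioo (by norm_num)]; simp
    have h2 := image_closure_subset_closure_image hc ⟨1, h1, rfl⟩
    simp only [one_smul] at h2
    refine closure_mono ?_ h2
    rintro _ ⟨s, hs, rfl⟩
    change ∑ j, ((s • x) j)^2 < 4^2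
    simp only [Pi.smul_apply, smul_eq_mul, mul_pow]
    rw [← Finset.mul_sum]
    have : 0 ≤ ∑ j, (x j)^2 := Finset.sum_nonneg fun _ _ => sq_nonneg _
    have s2 : s^2 < 1 := by nlinarith [hs.1, hs.2]
    nlinarith
  rintro ⟨t, x⟩ (⟨ht, hx⟩ | ⟨ht, hx⟩)
  · exact ⟨ht, hcl x (le_of_eq hx)⟩
  · refine ⟨?_, subset_closure hx⟩
    rw [ht]; simp

lemma extend_h (h : Fn d) (U : Set (ℝ × (Fin d → ℝ))) (hU : IsOpen U)
    (hQ : closure (Qc d 4) ⊆ U) (hh : ContDiffOn ℝ (⊤ : ℕ∞) h U) :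
    ∃ g : Fn d, ContDiff ℝ (⊤ : ℕ∞) g ∧ ∀ p ∈ closure (Qc d 4), g p = h p := by
  obtain ⟨f, f0, f1, -⟩ := exists_contMDiffMap_zero_one_nhds_of_isClosed
    (modelWithCornersSelf ℝ (ℝ × (Fin d → ℝ))) (n := (⊤ : ℕ∞)) hU.isClosed_compl
    (isClosed_closure (s := Qc d 4)) (Set.disjoint_left.2 fun p hp hq => hp (hQ hq))
  refine ⟨fun p => f p * h p, ?_, fun p hp => ?_⟩
  · rw [contDiff_iff_contDiffAt]
    intro p
    by_cases hp : p ∈ U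
    · exact (f.contMDiff.contDiff.contDiffAt).mul (hh.contDiffAt (hU.mem_nhds hp))
    · have : (fun p => f p * h p) =ᶠ[nhds p] fun _ => 0 := by
        filter_upwards [Filter.Eventually.filter_mono (nhds_le_nhdsSet hp) f0] with q hq
        rw [hq, zero_mul]
      exact contDiffAt_const.congr_of_eventuallyEq this
  · simp only
    rw [f1.self_of_nhdsSet p hp, one_mul]

lemma fd_congr {g h : Fn d} (hg : Set.EqOn g h (Qc d 4)) (ξ) :
    Set.EqOn (fun p => fderiv ℝ g p ξ) (fun p => fderiv ℝ h p ξ) (Qc d 4) := by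
  intro p hp
  have : g =ᶠ[nhds p] h := by
    filter_upwards [(Qc_open 4).mem_nhds hp] with q hq using hg hq
  simp only
  rw [this.fderiv_eq]

lemma sup_le_Q (f : Fn d) (M : ℝ) (hM : 0 ≤ M) (h : ∀ p ∈ Qc d 1, |f p| ≤ M) :
    (⨆ p ∈ Qc d 1, |f p|) ≤ M :=
  Real.iSup_le (fun p => Real.iSup_le (fun hp => h p hp) hM) hM

end fin6


theorem stmt11 (d : ℕ) (hd : 2 ≤ d) (δ : ℝ) (hδ : δ ∈ Set.Ioo (0 : ℝ) 1) :
    ∃ N : ℝ, 0 < N ∧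
      ∀ a : ℝ → Fin d → Fin d → ℝ,
        (∀ j k, ContDiff ℝ (⊤ : ℕ∞) fun s => a s j k) →
        (∀ s j k, a s j k = a s k j) →
        (∀ (s : ℝ) (θ : Fin d → ℝ),
          δ * ∑ j, (θ j) ^ 2 ≤ ∑ j, ∑ k, a s j k * θ j * θ k ∧
          ∑ j, ∑ k, a s j k * θ j * θ k ≤ δ⁻¹ * ∑ j, (θ j) ^ 2) →
        ∀ u : ℝ × (Fin d → ℝ) → ℝ, ContDiff ℝ (⊤ : ℕ∞) u → HasCompactSupport u →
          ∀ (h : ℝ × (Fin d → ℝ) → ℝ) (U : Set (ℝ × (Fin d → ℝ))),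
            IsOpen U → closure (Qc d 4) ⊆ U → ContDiffOn ℝ (⊤ : ℕ∞) h U →
            (∀ p ∈ Qc d 4,
              pdt h p + ∑ j, ∑ k, a (p.2 ⟨0, by omega⟩) j k * pdxx j k h p = 0) →
            (∀ p ∈ pbQc d 4, h p = u p) →
            (⨆ p ∈ Qc d 1, |pdt (pdt h) p|)
                + (∑ j, ⨆ p ∈ Qc d 1, |pdx j (pdt h) p|)
                + (∑ j, ∑ k ∈ Finset.univ.filter (fun k : Fin d => k.val ≠ 0),
                    ⨆ p ∈ Qc d 1, |pdxx j k (pdt h) p|)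
                + (∑ i, ∑ j, ∑ k ∈ Finset.univ.filter (fun k : Fin d => k.val ≠ 0),
                    ⨆ p ∈ Qc d 1, |pdx i (pdxx j k h) p|)
              ≤ N * (Real.sqrt (∫ p in Qc d 4,
                      (pdt u p + ∑ j, ∑ k, a (p.2 ⟨0, by omega⟩) j k * pdxx j k u p) ^ 2)
                    + Real.sqrt (∫ p in Qc d 4, ∑ j, ∑ k, (pdxx j k u p) ^ 2)) := by
  have hd0 := hδ.1
  let e : Fin d := ⟨0, by omega⟩
  have hm : (⟨1, by omega⟩ : Fin d) ≠ e := by simp [e]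
  obtain ⟨K, k0, hK⟩ := all_pt d δ hd0 e _ hm
  refine ⟨K + d * K + d * (d * K) + d * (d * (d * K)) + 1, by positivity, ?_⟩
  intro a ha1 ha2 ha3 u hu _ h U hU hQU hh hL hb
  have ha : Ell d δ a := ⟨hδ, ha1, ha2, ha3⟩
  obtain ⟨g, hg, hgh⟩ := extend_h h U hU hQU hh
  have E0 : Set.EqOn g h (Qc d 4) := fun p hp => hgh p (subset_closure hp)
  have Et : ∀ {f1 f2 : Fn d}, Set.EqOn f1 f2 (Qc d 4) → Set.EqOn (pdt f1) (pdt f2) (Qc d 4) :=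
    fun hf => fd_congr hf _
  have Ex : ∀ (j) {f1 f2 : Fn d}, Set.EqOn f1 f2 (Qc d 4) →
      Set.EqOn (pdx j f1) (pdx j f2) (Qc d 4) := fun j _ _ hf => fd_congr hf _
  have hs : Sol e a g := by
    refine ⟨hg, fun p hp => ?_⟩
    have := hL p hp
    unfold Lop
    rw [Et E0 hp]
    rw [← this]
    congr 1
    refine Finset.sum_congr rfl fun j _ => Finset.sum_congr rfl fun k _ => ?_
    unfold pdxx
    rw [Ex j (Ex k E0) hp]
  have hgb : ∀ p ∈ pbQc d 4, g p = u p := fun p hp => by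
    rw [hgh p (pb_closure hp), hb p hp]
  have key := hK a ha g u hs hu hgb
  have hX0 : 0 ≤ √(DD e a u) := Real.sqrt_nonneg _
  have hKX : 0 ≤ K * √(DD e a u) := by positivity
  have h14 : ∀ p ∈ Qc d 1, p ∈ Qc d 4 := fun p hp => Qc_mono (by norm_num) (by norm_num) hp
  have s1 : (⨆ p ∈ Qc d 1, |pdt (pdt h) p|) ≤ K * √(DD e a u) :=
    sup_le_Q _ _ hKX fun p hp => by
      rw [← Et (Et E0) (h14 p hp)]; exact (key p hp).1
  have s2 : ∀ j, (⨆ p ∈ Qc d 1, |pdx j (pdt h) p|) ≤ K * √(DD e a u) := fun j =>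
    sup_le_Q _ _ hKX fun p hp => by
      rw [← Ex j (Et E0) (h14 p hp)]; exact (key p hp).2.1 j
  have hke : ∀ k ∈ Finset.univ.filter (fun k : Fin d => k.val ≠ 0), k ≠ e := by
    intro k hk h
    rw [Finset.mem_filter] at hk
    exact hk.2 (by rw [h])
  have s3 : ∀ j, ∀ k ∈ Finset.univ.filter (fun k : Fin d => k.val ≠ 0),
      (⨆ p ∈ Qc d 1, |pdxx j k (pdt h) p|) ≤ K * √(DD e a u) := fun j k hk =>
    sup_le_Q _ _ hKX fun p hp => by
      unfold pdxx
      rw [← Ex j (Ex k (Et E0)) (h14 p hp)]; exact (key p hp).2.2.1 j k (hke k hk)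
  have s4 : ∀ i j, ∀ k ∈ Finset.univ.filter (fun k : Fin d => k.val ≠ 0),
      (⨆ p ∈ Qc d 1, |pdx i (pdxx j k h) p|) ≤ K * √(DD e a u) := fun i j k hk =>
    sup_le_Q _ _ hKX fun p hp => by
      unfold pdxx
      rw [← Ex i (Ex j (Ex k E0)) (h14 p hp)]; exact (key p hp).2.2.2 i j k (hke k hk)
  have sm : ∀ (s : Finset (Fin d)) (f : Fin d → ℝ) (M : ℝ), 0 ≤ M → (∀ k ∈ s, f k ≤ M) →
      ∑ k ∈ s, f k ≤ d * M := by
    intro s f M hM hf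
    refine (Finset.sum_le_card_nsmul s f M hf).trans ?_
    rw [nsmul_eq_mul]
    refine mul_le_mul_of_nonneg_right ?_ hM
    have := Finset.card_le_univ s
    rw [Fintype.card_fin] at this
    exact_mod_cast this
  set X := √(DD e a u) with hX
  have t2 := sm Finset.univ _ _ hKX fun j _ => s2 j
  have t3 := sm Finset.univ _ _ (by positivity) fun j _ => sm _ _ _ hKX (s3 j)
  have t4 := sm Finset.univ _ _ (by positivity) fun i _ =>
    sm Finset.univ _ _ (by positivity) fun j _ => sm _ _ _ hKX (s4 i j)
  refine (add_le_add (add_le_add (add_le_add s1 t2) t3) t4).trans ?_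
  have hXle : X ≤ Real.sqrt (∫ p in Qc d 4,
                      (pdt u p + ∑ j, ∑ k, a (p.2 ⟨0, by omega⟩) j k * pdxx j k u p) ^ 2)
                    + Real.sqrt (∫ p in Qc d 4, ∑ j, ∑ k, (pdxx j k u p) ^ 2) := by
    have q1 : 0 ≤ ∫ p in Qc d 4, (Lop e a u p)^2 := integral_nonneg fun _ => sq_nonneg _
    have q2 : 0 ≤ ∫ p in Qc d 4, ∑ j, ∑ k, (pdxx j k u p) ^ 2 := integral_nonneg fun p =>
      Finset.sum_nonneg fun _ _ => Finset.sum_nonneg fun _ _ => sq_nonneg _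
    change X ≤ √(∫ p in Qc d 4, (Lop e a u p)^2) + √(∫ p in Qc d 4, ∑ j, ∑ k, (pdxx j k u p) ^ 2)
    rw [hX]
    refine Real.sqrt_le_iff.2 ⟨by positivity, ?_⟩
    unfold DD
    nlinarith [Real.sq_sqrt q1, Real.sq_sqrt q2, mul_nonneg (Real.sqrt_nonneg
      (∫ p in Qc d 4, (Lop e a u p)^2)) (Real.sqrt_nonneg
      (∫ p in Qc d 4, ∑ j, ∑ k, (pdxx j k u p) ^ 2))]
  refine le_trans ?_ (mul_le_mul_of_nonneg_left hXle (by positivity))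
  linarith
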